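/- Let 865/886 < γ < 1, a ∈ ℤ \ {0}, 1 < c < 3 with c ≠ 2, and A > 0 be fixed, and let ε > 0 be sufficiently small. Set θ = (443/55)γ − 173/22 − ε, and suppose X^{1−ε} ≤ N ≤ X, H = N^{1−γ+ε}, N^θ ≤ D ≤ N^{θ+ε/2}, and |t| ≤ X^{1/4−c}. Let c(d,h) be complex numbers with |c(d,h)| = 1, and define G(n) = Σ_{1 ≤ h ≤ H} F_h(n) e(t n^c − h n^γ) with F_h(n) = Σ_{d ≤ D, gcd(d,a)=1, d | n−a} c(d,h). Then | Σ_{N < n ≤ 2N} Λ(n) G(n) | ≪ N / (log N)^A. -/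

import Mathlib

/-! For fixed `h` and `d`, Vaughan's identity decomposes the sum of `Λ(n) e(t n ^ c - h n ^ γ)` over
`n ≡ a` modulo `d` into type I sums and bilinear type II sums. Both reduce to exponential sums with
phase `β m ^ c - α m ^ γ` over a progression modulo `d`. For type II sums this is Cauchy–Schwarz
over blocks of length about `d N ^ (2 σ)`: two elements of a block correlate only if they are
congruent modulo `d`, so off the diagonal only about `N ^ (2 σ)` terms remain. Since
`|t| N ^ c ≤ N ^ (1 / 3)`, the term `t n ^ c` is a small perturbation of `h n ^ γ`, and the third
derivative test (Kuzmin–Landau after two van der Corput differencings) gains a factor `N ^ (2 σ)`.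

Each pair `(h, d)` thus contributes `N ^ (1 - σ + o(1)) / d`. With `σ` slightly above `1 - γ`, the
`N ^ (1 - γ + ε)` values of `h` leave a power saving. The loss in `d` is affordable because
`θ + 8 (1 - γ) < 1 / 5`. -/

/-- `e(t) = exp(2πit)`. -/
noncomputable def e (t : ℝ) : ℂ := Complex.exp (2 * Real.pi * Complex.I * t)

open Finset Filter Topology
open scoped fwdDiff ComplexConjugate

section Character

theorem e_eq_fourierChar (x : ℝ) : e x = (Real.fourierChar x : ℂ) := by
  rw [e, Real.fourierChar_apply]
  push_cast
  ring_nf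

theorem norm_e (x : ℝ) : ‖e x‖ = 1 := by
  rw [e_eq_fourierChar, Circle.norm_coe]

theorem e_add (x y : ℝ) : e (x + y) = e x * e y := by
  simp only [e_eq_fourierChar, AddChar.map_add_eq_mul, Circle.coe_mul]

theorem conj_e (x : ℝ) : conj (e x) = e (-x) := by
  rw [e_eq_fourierChar, e_eq_fourierChar, AddChar.map_neg_eq_inv, Circle.coe_inv_eq_conj]

theorem e_mul_conj_e (x y : ℝ) : e x * conj (e y) = e (x - y) := by
  rw [conj_e, ← e_add, sub_eq_add_neg]

theorem norm_sum_e_neg {ι : Type*} (s : Finset ι) (f : ι → ℝ) :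
    ‖∑ i ∈ s, e (-f i)‖ = ‖∑ i ∈ s, e (f i)‖ := by
  rw [← RCLike.norm_conj (∑ i ∈ s, e (f i)), map_sum]
  simp only [conj_e]

theorem norm_sum_e_le_card {ι : Type*} (s : Finset ι) (f : ι → ℝ) : ‖∑ i ∈ s, e (f i)‖ ≤ #s :=
  (norm_sum_le _ _).trans_eq (by simp [norm_e])

end Character

section KuzminLandau

theorem four_mul_le_norm_e_sub_one {x : ℝ} (hx₀ : 0 ≤ x) (hx : x ≤ 1 / 2) :
    4 * x ≤ ‖e x - 1‖ := by
  have he : e x = Complex.exp (Complex.I * (2 * Real.pi * x : ℝ)) := by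
    rw [e]; push_cast; ring_nf
  have hsin : 2 / Real.pi * (Real.pi * x) ≤ Real.sin (Real.pi * x) :=
    Real.mul_le_sin (by positivity) (by nlinarith [Real.pi_pos])
  rw [div_mul_eq_mul_div, mul_left_comm, mul_div_cancel_left₀ _ Real.pi_ne_zero] at hsin
  rw [he, Complex.norm_exp_I_mul_ofReal_sub_one, mul_assoc, mul_div_cancel_left₀ _ two_ne_zero]
  exact (by linarith : 4 * x ≤ 2 * Real.sin (Real.pi * x)).trans (le_abs_self _)

theorem e_sub_one_ne_zero {x : ℝ} (hx₀ : 0 < x) (hx : x ≤ 1 / 2) : e x - 1 ≠ 0 :=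
  norm_pos_iff.1 ((by positivity : 0 < 4 * x).trans_le (four_mul_le_norm_e_sub_one hx₀.le hx))

theorem norm_inv_e_sub_one_le {δ x : ℝ} (hδ : 0 < δ) (hδx : δ ≤ x) (hx : x ≤ 1 / 2) :
    ‖(e x - 1)⁻¹‖ ≤ 1 / (4 * δ) := by
  rw [norm_inv, ← one_div]
  have := four_mul_le_norm_e_sub_one (hδ.le.trans hδx) hx
  exact one_div_le_one_div_of_le (by positivity) (by linarith)

theorem inv_e_sub_one {x : ℝ} (hx : e x - 1 ≠ 0) :
    (e x - 1)⁻¹ = -(1 / 2) - Complex.I / 2 * (Real.cot (Real.pi * x) : ℝ) := by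
  have hcot : ((Real.cot (Real.pi * x) : ℝ) : ℂ) = (e x + 1) / (Complex.I * (1 - e x)) := by
    rw [Complex.ofReal_cot]
    push_cast
    exact Complex.cot_pi_eq_exp_ratio x
  have hx' : 1 - e x ≠ 0 := by rwa [← neg_sub, neg_ne_zero]
  rw [hcot]
  field_simp
  ring

theorem cot_pi_mul_nonneg {x : ℝ} (hx₀ : 0 < x) (hx : x ≤ 1 / 2) :
    0 ≤ Real.cot (Real.pi * x) := by
  have := Real.pi_pos
  rw [Real.cot_eq_cos_div_sin]
  exact div_nonneg (Real.cos_nonneg_of_mem_Icc ⟨by nlinarith, by nlinarith⟩)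
    (Real.sin_nonneg_of_nonneg_of_le_pi (by positivity) (by nlinarith))

theorem cot_pi_mul_le {δ x : ℝ} (hδ : 0 < δ) (hδx : δ ≤ x) (hx : x ≤ 1 / 2) :
    Real.cot (Real.pi * x) ≤ 1 / (2 * δ) := by
  have hsin : 2 / Real.pi * (Real.pi * x) ≤ Real.sin (Real.pi * x) :=
    Real.mul_le_sin (by nlinarith [Real.pi_pos]) (by nlinarith [Real.pi_pos])
  rw [div_mul_eq_mul_div, mul_left_comm, mul_div_cancel_left₀ _ Real.pi_ne_zero] at hsin
  rw [Real.cot_eq_cos_div_sin]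
  exact div_le_div₀ zero_le_one (Real.cos_le_one _) (by positivity) (by linarith)

theorem cot_pi_mul_le_cot_pi_mul {x y : ℝ} (hx₀ : 0 < x) (hxy : x ≤ y) (hy : y ≤ 1 / 2) :
    Real.cot (Real.pi * y) ≤ Real.cot (Real.pi * x) := by
  have := Real.pi_pos
  rw [Real.cot_eq_cos_div_sin, Real.cot_eq_cos_div_sin]
  refine div_le_div₀ (Real.cos_nonneg_of_mem_Icc ⟨by nlinarith, by nlinarith⟩)
    (Real.cos_le_cos_of_nonneg_of_le_pi (by positivity) (by nlinarith) (by gcongr))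
    (Real.sin_pos_of_pos_of_lt_pi (by positivity) (by nlinarith))
    (Real.sin_le_sin_of_le_of_le_pi_div_two (by nlinarith) (by nlinarith) (by gcongr))

theorem norm_inv_e_sub_one_sub_inv {x y : ℝ} (hx₀ : 0 < x) (hxy : x ≤ y) (hy : y ≤ 1 / 2) :
    ‖(e y - 1)⁻¹ - (e x - 1)⁻¹‖ = (Real.cot (Real.pi * x) - Real.cot (Real.pi * y)) / 2 := by
  rw [inv_e_sub_one (e_sub_one_ne_zero hx₀ (hxy.trans hy)),
    inv_e_sub_one (e_sub_one_ne_zero (hx₀.trans_le hxy) hy), sub_sub_sub_cancel_left, ← mul_sub,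
    ← Complex.ofReal_sub, norm_mul, Complex.norm_real, Real.norm_of_nonneg
      (sub_nonneg.2 (cot_pi_mul_le_cot_pi_mul hx₀ hxy hy))]
  simp
  ring

theorem e_eq_inv_mul_sub {f : ℕ → ℝ} {k : ℕ} (h : e (Δ_[1] f k) - 1 ≠ 0) :
    e (f k) = (e (Δ_[1] f k) - 1)⁻¹ * (e (f (k + 1)) - e (f k)) := by
  have hstep : e (f (k + 1)) = e (Δ_[1] f k) * e (f k) := by rw [← e_add, fwdDiff]; ring_nf
  rw [hstep, eq_inv_mul_iff_mul_eq₀ h]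
  ring

/-- Partial summation: the boundary term at `n` is split off, and the total variation of
`(e(Δf) - 1)⁻¹`, whose imaginary part is a monotone cotangent, telescopes. -/
theorem norm_sum_e_sub_boundary_le {f : ℕ → ℝ} {δ : ℝ} (hδ : 0 < δ) (n : ℕ)
    (h₁ : ∀ k ≤ n, Δ_[1] f k ∈ Set.Icc δ (1 / 2)) (h₂ : ∀ k < n, Δ_[1] ^[2] f k ≤ 0) :
    ‖∑ k ∈ range (n + 1), e (f k) - (e (Δ_[1] f n) - 1)⁻¹ * e (f (n + 1))‖ ≤
      1 / (4 * δ) + (Real.cot (Real.pi * Δ_[1] f n) - Real.cot (Real.pi * Δ_[1] f 0)) / 2 := by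
  have hpos : ∀ k ≤ n, 0 < Δ_[1] f k := fun k hk ↦ hδ.trans_le (h₁ k hk).1
  have hne : ∀ k ≤ n, e (Δ_[1] f k) - 1 ≠ 0 := fun k hk ↦
    e_sub_one_ne_zero (hpos k hk) (h₁ k hk).2
  induction n with
  | zero =>
    have hterm : ∑ k ∈ range (0 + 1), e (f k) - (e (Δ_[1] f 0) - 1)⁻¹ * e (f (0 + 1)) =
        -((e (Δ_[1] f 0) - 1)⁻¹ * e (f 0)) := by
      rw [zero_add, sum_range_one]
      linear_combination e_eq_inv_mul_sub (hne 0 le_rfl)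
    rw [hterm, norm_neg, norm_mul, norm_e, mul_one, sub_self, zero_div, add_zero]
    exact norm_inv_e_sub_one_le hδ (h₁ 0 le_rfl).1 (h₁ 0 le_rfl).2
  | succ n ih =>
    have hanti : Δ_[1] f (n + 1) ≤ Δ_[1] f n := sub_nonpos.1 (h₂ n n.lt_succ_self)
    have hsplit : ∑ k ∈ range (n + 1 + 1), e (f k) -
          (e (Δ_[1] f (n + 1)) - 1)⁻¹ * e (f (n + 1 + 1)) =
        (∑ k ∈ range (n + 1), e (f k) - (e (Δ_[1] f n) - 1)⁻¹ * e (f (n + 1))) +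
          ((e (Δ_[1] f n) - 1)⁻¹ - (e (Δ_[1] f (n + 1)) - 1)⁻¹) * e (f (n + 1)) := by
      rw [sum_range_succ]
      linear_combination e_eq_inv_mul_sub (hne (n + 1) le_rfl)
    have hvar := norm_inv_e_sub_one_sub_inv (hpos (n + 1) le_rfl) hanti (h₁ n n.le_succ).2
    have hprev := ih (fun k hk ↦ h₁ k (by omega)) (fun k hk ↦ h₂ k (by omega))
      (fun k hk ↦ hpos k (by omega)) (fun k hk ↦ hne k (by omega))
    rw [hsplit]
    refine (norm_add_le _ _).trans ?_
    rw [norm_mul, norm_e, mul_one, hvar]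
    linarith

theorem norm_sum_e_le_of_fwdDiff_mem_Icc {f : ℕ → ℝ} {δ : ℝ} (hδ : 0 < δ) (hδ' : δ ≤ 1 / 2)
    {n : ℕ} (h₁ : ∀ k, k + 1 < n → Δ_[1] f k ∈ Set.Icc δ (1 / 2))
    (h₂ : ∀ k, k + 2 < n → Δ_[1] ^[2] f k ≤ 0) :
    ‖∑ k ∈ range n, e (f k)‖ ≤ 2 / δ := by
  have hone : 1 ≤ 1 / (2 * δ) := by rw [le_div_iff₀ (by positivity)]; linarith
  have hquarter : 1 / (4 * δ) = 1 / (2 * δ) / 2 := by field_simp; norm_num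
  have htwo : 2 / δ = 4 * (1 / (2 * δ)) := by field_simp; norm_num
  rcases n with _ | _ | n
  · simpa using by positivity
  · rw [zero_add, sum_range_one, norm_e, htwo]
    linarith
  · have h0 := h₁ 0 (by omega)
    have hn := h₁ n (by omega)
    have hmain := norm_sum_e_sub_boundary_le hδ n (fun k hk ↦ h₁ k (by omega))
      (fun k hk ↦ h₂ k (by omega))
    have hbdry : ‖(e (Δ_[1] f n) - 1)⁻¹ * e (f (n + 1))‖ ≤ 1 / (4 * δ) := by
      rw [norm_mul, norm_e, mul_one]
      exact norm_inv_e_sub_one_le hδ hn.1 hn.2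
    have hcot0 := cot_pi_mul_nonneg (hδ.trans_le h0.1) h0.2
    have hcotn := cot_pi_mul_le hδ hn.1 hn.2
    rw [sum_range_succ, ← sub_add_cancel (∑ k ∈ range (n + 1), e (f k))
      ((e (Δ_[1] f n) - 1)⁻¹ * e (f (n + 1)))]
    refine norm_add₃_le.trans ?_
    rw [norm_e]
    linarith

end KuzminLandau

section VanDerCorput

theorem ofReal_norm_sum_sq {ι : Type*} (s : Finset ι) (u : ι → ℂ) :
    ((‖∑ i ∈ s, u i‖ ^ 2 : ℝ) : ℂ) = ∑ i ∈ s, ∑ j ∈ s, u i * conj (u j) := by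
  rw [← sum_mul_sum, ← map_sum, Complex.mul_conj, Complex.normSq_eq_norm_sq]

theorem sum_norm_sum_sq_le {ι κ : Type*} (s : Finset κ) (t : Finset ι) (u : ι → κ → ℂ) :
    ∑ k ∈ s, ‖∑ i ∈ t, u i k‖ ^ 2 ≤
      ∑ i ∈ t, ∑ j ∈ t, ‖∑ k ∈ s, u i k * conj (u j k)‖ := by
  have hexpand : ((∑ k ∈ s, ‖∑ i ∈ t, u i k‖ ^ 2 : ℝ) : ℂ) =
      ∑ i ∈ t, ∑ j ∈ t, ∑ k ∈ s, u i k * conj (u j k) := by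
    simp only [Complex.ofReal_sum, ofReal_norm_sum_sq]
    rw [sum_comm]
    exact sum_congr rfl fun i _ ↦ sum_comm
  calc ∑ k ∈ s, ‖∑ i ∈ t, u i k‖ ^ 2 = ‖((∑ k ∈ s, ‖∑ i ∈ t, u i k‖ ^ 2 : ℝ) : ℂ)‖ := by
        rw [Complex.norm_real, Real.norm_of_nonneg (by positivity)]
    _ ≤ ∑ i ∈ t, ∑ j ∈ t, ‖∑ k ∈ s, u i k * conj (u j k)‖ := by
        rw [hexpand]
        exact (norm_sum_le _ _).trans (sum_le_sum fun i _ ↦ norm_sum_le _ _)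

theorem sum_dist_le {b : ℕ → ℝ} (hb : ∀ q, 0 ≤ b q) {j Q : ℕ} (hj : j < Q) :
    ∑ i ∈ range Q, b (Nat.dist j i) ≤ b 0 + 2 * ∑ q ∈ Ico 1 Q, b q := by
  have hleft : ∑ i ∈ Ico 0 j, b (Nat.dist j i) = ∑ q ∈ Ico 1 (j + 1), b q := by
    refine sum_nbij' (j - ·) (j - ·) ?_ ?_ ?_ ?_ fun i hi ↦ congrArg b ?_ <;>
      grind [Nat.dist]
  have hright : ∑ i ∈ Ico (j + 1) Q, b (Nat.dist j i) = ∑ q ∈ Ico 1 (Q - j), b q := by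
    refine sum_nbij' (· - j) (· + j) ?_ ?_ ?_ ?_ fun i hi ↦ congrArg b ?_ <;>
      grind [Nat.dist]
  have hmono : ∀ R ≤ Q, ∑ q ∈ Ico 1 R, b q ≤ ∑ q ∈ Ico 1 Q, b q := fun R hR ↦
    sum_le_sum_of_subset_of_nonneg (Ico_subset_Ico_right hR) fun q _ _ ↦ hb q
  rw [range_eq_Ico, ← sum_Ico_consecutive _ j.zero_le hj.le, sum_eq_sum_Ico_succ_bot hj,
    hleft, hright, Nat.dist_self]
  linarith [hmono (j + 1) hj, hmono (Q - j) (Nat.sub_le Q j)]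

/-- The correlation at shift `q` of the first `n` terms of the sequence `z` with itself. -/
def autocorr (z : ℕ → ℂ) (n q : ℕ) : ℂ := ∑ k ∈ range (n - q), z (k + q) * conj (z k)

/-- The first `n` terms of `z`, moved to `[Q, Q + n)` and extended by zero, so that shifts by at
most `Q` to the left lose no term. -/
def zeroPad (z : ℕ → ℂ) (n Q k : ℕ) : ℂ := if Q ≤ k ∧ k < Q + n then z (k - Q) else 0

variable {z : ℕ → ℂ} {n Q : ℕ}

theorem zeroPad_add {k : ℕ} (hk : k < n) : zeroPad z n Q (k + Q) = z k := by
  rw [zeroPad, if_pos (by omega), Nat.add_sub_cancel]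

theorem zeroPad_of_notMem {k : ℕ} (hk : ¬(Q ≤ k ∧ k < Q + n)) : zeroPad z n Q k = 0 :=
  if_neg hk

theorem sum_range_add_eq_of_support {g : ℕ → ℂ} (hg : ∀ k, ¬(Q ≤ k ∧ k < Q + n) → g k = 0)
    {j : ℕ} (hj : j ≤ Q) : ∑ k ∈ range (n + Q), g (k + j) = ∑ k ∈ range n, g (k + Q) := by
  obtain ⟨r, rfl⟩ := Nat.exists_eq_add_of_le' hj
  rw [show n + (r + j) = r + (n + j) by ring, sum_range_add, sum_range_add,
    sum_eq_zero fun _ _ ↦ hg _ (by grind), zero_add,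
    sum_eq_zero (s := range j) fun _ _ ↦ hg _ (by grind), add_zero]
  exact sum_congr rfl fun k _ ↦ congrArg g (by ring)

theorem sum_zeroPad_add {j : ℕ} (hj : j ≤ Q) :
    ∑ k ∈ range (n + Q), zeroPad z n Q (k + j) = ∑ k ∈ range n, z k := by
  rw [sum_range_add_eq_of_support (fun k ↦ zeroPad_of_notMem) hj]
  exact sum_congr rfl fun k hk ↦ zeroPad_add (mem_range.1 hk)

theorem sum_zeroPad_mul_conj_of_le {i j : ℕ} (hij : i ≤ j) (hi : i ≤ Q) :
    ∑ k ∈ range (n + Q), zeroPad z n Q (k + j) * conj (zeroPad z n Q (k + i)) =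
      autocorr z n (j - i) := by
  obtain ⟨q, rfl⟩ := Nat.exists_eq_add_of_le' hij
  have hsupp : ∀ k, ¬(Q ≤ k ∧ k < Q + n) →
      zeroPad z n Q (k + q) * conj (zeroPad z n Q k) = 0 := fun k hk ↦ by
    rw [zeroPad_of_notMem hk, map_zero, mul_zero]
  calc _ = ∑ k ∈ range (n + Q), zeroPad z n Q (k + i + q) * conj (zeroPad z n Q (k + i)) :=
        sum_congr rfl fun k _ ↦ by rw [add_assoc, add_comm i q]
    _ = ∑ k ∈ range n, zeroPad z n Q (k + Q + q) * conj (zeroPad z n Q (k + Q)) :=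
        sum_range_add_eq_of_support hsupp hi
    _ = ∑ k ∈ range (n - q), zeroPad z n Q (k + Q + q) * conj (zeroPad z n Q (k + Q)) :=
        (sum_subset (range_mono (Nat.sub_le n q)) fun k _ hk ↦ by
          rw [zeroPad_of_notMem (by grind), zero_mul]).symm
    _ = autocorr z n (q + i - i) := by
        rw [Nat.add_sub_cancel, autocorr]
        refine sum_congr rfl fun k hk ↦ ?_
        rw [mem_range] at hk
        rw [add_right_comm, zeroPad_add (by omega), zeroPad_add (by omega)]

theorem norm_sum_zeroPad_mul_conj {i j : ℕ} (hi : i ≤ Q) (hj : j ≤ Q) :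
    ‖∑ k ∈ range (n + Q), zeroPad z n Q (k + j) * conj (zeroPad z n Q (k + i))‖ =
      ‖autocorr z n (Nat.dist j i)‖ := by
  rcases le_total i j with h | h
  · rw [sum_zeroPad_mul_conj_of_le h hi, Nat.dist_eq_sub_of_le_right h]
  · rw [Nat.dist_eq_sub_of_le h, ← sum_zeroPad_mul_conj_of_le h hj, ← Complex.norm_conj, map_sum]
    simp only [map_mul, Complex.conj_conj, mul_comm]

theorem mul_norm_sum_sq_le_autocorr (z : ℕ → ℂ) (n Q : ℕ) :
    Q * ‖∑ k ∈ range n, z k‖ ^ 2 ≤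
      (n + Q) * (‖autocorr z n 0‖ + 2 * ∑ q ∈ Ico 1 Q, ‖autocorr z n q‖) := by
  rcases Q.eq_zero_or_pos with rfl | hQ
  · simpa using by positivity
  set T := ‖autocorr z n 0‖ + 2 * ∑ q ∈ Ico 1 Q, ‖autocorr z n q‖
  have havg : (Q : ℂ) * ∑ k ∈ range n, z k =
      ∑ k ∈ range (n + Q), ∑ j ∈ range Q, zeroPad z n Q (k + j) := by
    rw [sum_comm, sum_congr rfl fun j hj ↦ sum_zeroPad_add (mem_range.1 hj).le]
    simp
  have hcorr : ∑ k ∈ range (n + Q), ‖∑ j ∈ range Q, zeroPad z n Q (k + j)‖ ^ 2 ≤ Q * T :=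
    calc _ ≤ ∑ j ∈ range Q, ∑ i ∈ range Q, ‖autocorr z n (Nat.dist j i)‖ := by
          refine (sum_norm_sum_sq_le _ _ _).trans_eq (sum_congr rfl fun j hj ↦
            sum_congr rfl fun i hi ↦ ?_)
          exact norm_sum_zeroPad_mul_conj (mem_range.1 hi).le (mem_range.1 hj).le
      _ ≤ ∑ _ ∈ range Q, T := sum_le_sum fun j hj ↦
          sum_dist_le (fun q ↦ norm_nonneg (autocorr z n q)) (mem_range.1 hj)
      _ = Q * T := by simp
  have hcauchy : (Q * ‖∑ k ∈ range n, z k‖) ^ 2 ≤ (n + Q) * (Q * T) :=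
    calc _ = ‖∑ k ∈ range (n + Q), ∑ j ∈ range Q, zeroPad z n Q (k + j)‖ ^ 2 := by
          rw [← havg, norm_mul, Complex.norm_natCast]
      _ ≤ (∑ k ∈ range (n + Q), ‖∑ j ∈ range Q, zeroPad z n Q (k + j)‖) ^ 2 := by
          gcongr
          exact norm_sum_le _ _
      _ ≤ (n + Q) * ∑ k ∈ range (n + Q), ‖∑ j ∈ range Q, zeroPad z n Q (k + j)‖ ^ 2 := by
          simpa using sq_sum_le_card_mul_sum_sq (s := range (n + Q))
            (f := fun k ↦ ‖∑ j ∈ range Q, zeroPad z n Q (k + j)‖)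
      _ ≤ (n + Q) * (Q * T) := by gcongr
  have hQ' : (0 : ℝ) < Q := by exact_mod_cast hQ
  exact le_of_mul_le_mul_left (by linarith) hQ'

end VanDerCorput

section ForwardDifference

variable {f : ℕ → ℝ}

theorem autocorr_e (f : ℕ → ℝ) (n q : ℕ) :
    autocorr (fun k ↦ e (f k)) n q = ∑ k ∈ range (n - q), e (Δ_[q] f k) :=
  sum_congr rfl fun _ _ ↦ e_mul_conj_e _ _

theorem norm_sum_e_sq_le_fwdDiff {n Q : ℕ} {P : ℝ} (hnP : n ≤ P) (hQ : 1 ≤ Q) (hQP : Q ≤ P) :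
    ‖∑ k ∈ range n, e (f k)‖ ^ 2 ≤
      2 * P / Q * (P + 2 * ∑ q ∈ Ioc 0 Q, ‖∑ k ∈ range (n - q), e (Δ_[q] f k)‖) := by
  have hQ' : (0 : ℝ) < Q := by exact_mod_cast hQ
  have hvdc := mul_norm_sum_sq_le_autocorr (fun k ↦ e (f k)) n Q
  simp only [autocorr_e] at hvdc
  have hdiag : ‖∑ k ∈ range (n - 0), e (Δ_[0] f k)‖ ≤ P :=
    (norm_sum_e_le_card _ _).trans (by simpa using hnP)
  rw [div_mul_eq_mul_div, le_div_iff₀ hQ', mul_comm]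
  refine hvdc.trans ?_
  have hsubset : Ico 1 Q ⊆ Ioc 0 Q := fun q hq ↦ by
    rw [mem_Ico] at hq
    exact mem_Ioc.2 ⟨hq.1, hq.2.le⟩
  gcongr <;> linarith

theorem fwdDiff_eq_sum (f : ℕ → ℝ) (q k : ℕ) : Δ_[q] f k = ∑ i ∈ range q, Δ_[1] f (k + i) :=
  (sum_range_sub (fun i ↦ f (k + i)) q).symm

theorem fwdDiff_one_iter_fwdDiff (f : ℕ → ℝ) (q j k : ℕ) :
    Δ_[1] ^[j] (Δ_[q] f) k = ∑ i ∈ range q, Δ_[1] ^[j + 1] f (k + i) := by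
  have hcomm : Function.Commute (fwdDiff 1) (fwdDiff (G := ℝ) q) := fun g ↦ by
    funext k
    simp only [fwdDiff, add_right_comm]
    ring
  rw [(hcomm.iterate_left j).eq, fwdDiff_eq_sum, Function.iterate_succ']
  rfl

theorem fwdDiff_one_iter_fwdDiff_mem_Icc {q j k : ℕ} {a b : ℝ}
    (h : ∀ i < q, Δ_[1] ^[j + 1] f (k + i) ∈ Set.Icc a b) :
    Δ_[1] ^[j] (Δ_[q] f) k ∈ Set.Icc (q * a) (q * b) := by
  rw [fwdDiff_one_iter_fwdDiff]
  have hlower := card_nsmul_le_sum (range q) _ a fun i hi ↦ (h i (mem_range.1 hi)).1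
  have hupper := sum_le_card_nsmul (range q) _ b fun i hi ↦ (h i (mem_range.1 hi)).2
  rw [card_range, nsmul_eq_mul] at hlower hupper
  exact ⟨hlower, hupper⟩

theorem fwdDiff_one_iter_fwdDiff_nonpos {q j k : ℕ}
    (h : ∀ i < q, Δ_[1] ^[j + 1] f (k + i) ≤ 0) : Δ_[1] ^[j] (Δ_[q] f) k ≤ 0 := by
  rw [fwdDiff_one_iter_fwdDiff]
  exact sum_nonpos fun i hi ↦ h i (mem_range.1 hi)

end ForwardDifference

section DerivativeTests

theorem sum_Ioc_one_div_le {n : ℕ} {P : ℝ} (hP : 1 ≤ P) (hnP : n ≤ P) :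
    ∑ q ∈ Ioc 0 n, 1 / (q : ℝ) ≤ 1 + Real.log P := by
  rcases n.eq_zero_or_pos with rfl | hn
  · simpa using by linarith [Real.log_nonneg hP]
  · have hharmonic : ∑ q ∈ Ioc 0 n, 1 / (q : ℝ) = harmonic n := by
      simp [harmonic_eq_sum_Icc, ← Icc_add_one_left_eq_Ioc]
    rw [hharmonic]
    refine (harmonic_le_one_add_log n).trans ?_
    gcongr

theorem sum_Ioc_one_div_sqrt_le (n : ℕ) : ∑ q ∈ Ioc 0 n, 1 / √(q : ℝ) ≤ 2 * √n := by
  induction n with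
  | zero => simp
  | succ n ih =>
    have hmono : √(n : ℝ) ≤ √((n + 1 : ℕ) : ℝ) := Real.sqrt_le_sqrt (by simp)
    have hgap : (√((n + 1 : ℕ) : ℝ) - √n) * (√((n + 1 : ℕ) : ℝ) + √n) = 1 := by
      rw [mul_comm, ← sq_sub_sq, Real.sq_sqrt (Nat.cast_nonneg _), Real.sq_sqrt (Nat.cast_nonneg _)]
      simp
    have hterm : 1 / √((n + 1 : ℕ) : ℝ) ≤ 2 * (√((n + 1 : ℕ) : ℝ) - √n) := by
      rw [div_le_iff₀ (Real.sqrt_pos.2 (by positivity))]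
      nlinarith
    rw [sum_Ioc_succ_top n.zero_le]
    linarith

variable {f : ℕ → ℝ} {n : ℕ} {P K : ℝ}

theorem norm_sum_e_sq_le_of_fwdDiff_two_of_mul_le {l : ℝ} (hnP : n ≤ P) (hP : 1 ≤ P) (hl : 0 < l)
    (hK : 1 ≤ K) (h₂ : ∀ k, k + 2 < n → Δ_[1] ^[2] f k ∈ Set.Icc l (K * l))
    (h₃ : ∀ k, k + 3 < n → Δ_[1] ^[3] f k ≤ 0)
    {Q : ℕ} (hQ : 1 ≤ Q) (hQP : Q ≤ P) (hQl : Q * (K * l) ≤ 1 / 2) :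
    ‖∑ k ∈ range n, e (f k)‖ ^ 2 ≤ 2 * P / Q * (P + 4 * ((1 + Real.log P) / l)) := by
  have hKL : ∀ q ∈ Ioc 0 Q, ‖∑ k ∈ range (n - q), e (Δ_[q] f k)‖ ≤ 2 / l * (1 / q) := by
    intro q hq
    obtain ⟨hq1, hqQ⟩ := mem_Ioc.1 hq
    have : (0 : ℝ) < q := by exact_mod_cast hq1
    have hupper : q * (K * l) ≤ 1 / 2 := hQl.trans' (by gcongr)
    have hlower : q * l ≤ 1 / 2 := hupper.trans' (by gcongr; exact le_mul_of_one_le_left hl.le hK)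
    refine (norm_sum_e_le_of_fwdDiff_mem_Icc (δ := q * l) (by positivity) hlower
      (fun k hk ↦ ?_) (fun k hk ↦ ?_)).trans_eq (by field_simp)
    · exact Set.Icc_subset_Icc_right hupper
        (fwdDiff_one_iter_fwdDiff_mem_Icc (j := 1) fun i hi ↦ h₂ _ (by omega))
    · exact fwdDiff_one_iter_fwdDiff_nonpos fun i hi ↦ h₃ _ (by omega)
  refine (norm_sum_e_sq_le_fwdDiff hnP hQ hQP).trans ?_
  refine mul_le_mul_of_nonneg_left (add_le_add_right ?_ P) (by positivity)
  calc 2 * ∑ q ∈ Ioc 0 Q, ‖∑ k ∈ range (n - q), e (Δ_[q] f k)‖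
      ≤ 2 * ∑ q ∈ Ioc 0 Q, 2 / l * (1 / (q : ℝ)) := by
        gcongr with q hq
        exact hKL q hq
    _ ≤ 2 * (2 / l * (1 + Real.log P)) := by
        rw [← mul_sum]
        gcongr
        exact sum_Ioc_one_div_le hP hQP
    _ = 4 * ((1 + Real.log P) / l) := by ring

theorem norm_sum_e_sq_le_sq (hnP : n ≤ P) : ‖∑ k ∈ range n, e (f k)‖ ^ 2 ≤ P ^ 2 := by
  gcongr
  exact (norm_sum_e_le_card _ _).trans (by simpa using hnP)

/-- The optimal shift length in van der Corput's inequality is `min P (1 / (2 m))`. -/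
theorem exists_shift_length {m : ℝ} (hP : 1 ≤ P) (hm₀ : 0 < m) (hm : m ≤ 1 / 2) :
    ∃ Q : ℕ, 1 ≤ Q ∧ Q ≤ P ∧ Q * m ≤ 1 / 2 ∧ 2 * P / Q ≤ 4 + 8 * (P * m) := by
  set y := min P (1 / (2 * m)) with hy
  have hy1 : 1 ≤ y := le_min hP ((one_le_div (by positivity)).2 (by linarith))
  have hfloor : (⌊y⌋₊ : ℝ) ≤ y := Nat.floor_le (by linarith)
  have hratio : P / y ≤ 1 + 2 * (P * m) := by
    rw [div_le_iff₀ (by linarith), hy]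
    rcases min_choice P (1 / (2 * m)) with h | h <;> rw [h]
    · linarith [show 0 ≤ 2 * (P * m) * P by positivity]
    · rw [show (1 + 2 * (P * m)) * (1 / (2 * m)) = 1 / (2 * m) + P by field_simp]
      exact le_add_of_nonneg_left (by positivity)
  refine ⟨⌊y⌋₊, (Nat.one_le_floor_iff y).2 hy1, hfloor.trans (min_le_left _ _), ?_, ?_⟩
  · calc ⌊y⌋₊ * m ≤ 1 / (2 * m) * m := by
          gcongr
          exact hfloor.trans (min_le_right _ _)
      _ = 1 / 2 := by field_simp
  · calc 2 * P / ⌊y⌋₊ ≤ 2 * P / (y / 2) := by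
          gcongr
          exact (Nat.div_two_lt_floor hy1).le
      _ = 4 * (P / y) := by field_simp; ring
      _ ≤ 4 * (1 + 2 * (P * m)) := by gcongr
      _ = 4 + 8 * (P * m) := by ring

theorem two_mul_le_sq_mul_add_one_div {l : ℝ} (x : ℝ) (hl : 0 < l) :
    2 * x ≤ x ^ 2 * l + 1 / l := by
  have hsq : x ^ 2 * l + 1 / l - 2 * x = (x * l - 1) ^ 2 / l := by field_simp; ring
  linarith [show 0 ≤ (x * l - 1) ^ 2 / l by positivity]

theorem norm_sum_e_sq_le_of_fwdDiff_two {l : ℝ} (hnP : n ≤ P) (hP : 1 ≤ P) (hl : 0 < l)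
    (hK : 1 ≤ K) (h₂ : ∀ k, k + 2 < n → Δ_[1] ^[2] f k ∈ Set.Icc l (K * l))
    (h₃ : ∀ k, k + 3 < n → Δ_[1] ^[3] f k ≤ 0) :
    ‖∑ k ∈ range n, e (f k)‖ ^ 2 ≤ 36 * (K * (1 + Real.log P)) * (P ^ 2 * l + 1 / l) := by
  have hL : 1 ≤ 1 + Real.log P := by linarith [Real.log_nonneg hP]
  have hKL : 1 ≤ K * (1 + Real.log P) := one_le_mul_of_one_le_of_one_le hK hL
  have hKKL : K ≤ K * (1 + Real.log P) := le_mul_of_one_le_right (by linarith) hL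
  rcases lt_or_ge (1 / 2) (K * l) with hKl | hKl
  · calc ‖∑ k ∈ range n, e (f k)‖ ^ 2 ≤ P ^ 2 := norm_sum_e_sq_le_sq hnP
      _ ≤ P ^ 2 * (2 * (K * l)) := le_mul_of_one_le_right (by positivity) (by linarith)
      _ = 2 * K * (P ^ 2 * l) := by ring
      _ ≤ 36 * (K * (1 + Real.log P)) * (P ^ 2 * l + 1 / l) := by
          gcongr
          · norm_num
          · exact le_add_of_nonneg_right (by positivity)
  · obtain ⟨Q, hQ, hQP, hQl, hfactor⟩ := exists_shift_length hP (by positivity) hKl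
    calc _ ≤ 2 * P / Q * (P + 4 * ((1 + Real.log P) / l)) :=
          norm_sum_e_sq_le_of_fwdDiff_two_of_mul_le hnP hP hl hK h₂ h₃ hQ hQP hQl
      _ ≤ (4 + 8 * (P * (K * l))) * (P + 4 * ((1 + Real.log P) / l)) := by gcongr
      _ = 2 * (2 * P) + 16 * (1 + Real.log P) * (1 / l) + 8 * K * (P ^ 2 * l) +
            16 * (K * (1 + Real.log P)) * (2 * P) := by field_simp; ring
      _ ≤ 2 * (K * (1 + Real.log P)) * (P ^ 2 * l + 1 / l) +
            16 * (K * (1 + Real.log P)) * (1 / l) +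
            16 * (K * (1 + Real.log P)) * (P ^ 2 * l) +
            16 * (K * (1 + Real.log P)) * (P ^ 2 * l + 1 / l) := by
          have hamgm := two_mul_le_sq_mul_add_one_div P hl
          gcongr
          · linarith
          · exact le_mul_of_one_le_left (by linarith) hK
          · norm_num
      _ ≤ 36 * (K * (1 + Real.log P)) * (P ^ 2 * l + 1 / l) := by
          have : 0 ≤ K * (1 + Real.log P) * (P ^ 2 * l + 1 / l) := by positivity
          linarith

/-- `P / r + r √r / √q` is the square root of the bound of the second derivative test for the
differenced phase `Δ_[q] f`, whose second difference has order `q / r ^ 3`. -/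
theorem norm_sum_e_fwdDiff_le_of_fwdDiff_three {r : ℝ} (hnP : n ≤ P) (hP : 1 ≤ P) (hr : 0 < r)
    (hK : 1 ≤ K) (h₃ : ∀ k, k + 3 < n → Δ_[1] ^[3] f k ∈ Set.Icc (1 / r ^ 3) (K * (1 / r ^ 3)))
    (h₄ : ∀ k, k + 4 < n → Δ_[1] ^[4] f k ≤ 0) {q : ℕ} (hq : 1 ≤ q) (hqr : q ≤ r) :
    ‖∑ k ∈ range (n - q), e (Δ_[q] f k)‖ ≤
      6 * (K * (1 + Real.log P)) * (P / r + r * √r * (1 / √q)) := by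
  have hL : 1 ≤ K * (1 + Real.log P) :=
    one_le_mul_of_one_le_of_one_le hK (by linarith [Real.log_nonneg hP])
  have hq0 : (0 : ℝ) < q := by exact_mod_cast hq
  have hsecond := norm_sum_e_sq_le_of_fwdDiff_two (f := Δ_[q] f) (n := n - q)
    (l := q * (1 / r ^ 3)) (le_trans (by gcongr; omega) hnP) hP (by positivity) hK
    (fun k hk ↦ by
      rw [mul_left_comm]
      exact fwdDiff_one_iter_fwdDiff_mem_Icc fun i hi ↦ h₃ _ (by omega))
    (fun k hk ↦ fwdDiff_one_iter_fwdDiff_nonpos fun i hi ↦ h₄ _ (by omega))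
  rw [← sq_le_sq₀ (norm_nonneg _) (by positivity)]
  calc _ ≤ 36 * (K * (1 + Real.log P)) *
        (P ^ 2 * (q * (1 / r ^ 3)) + 1 / (q * (1 / r ^ 3))) := hsecond
    _ ≤ 36 * (K * (1 + Real.log P)) ^ 2 * ((P / r) ^ 2 + (r * √r * (1 / √q)) ^ 2) := by
        gcongr
        · exact le_self_pow₀ hL two_ne_zero
        · calc P ^ 2 * (q * (1 / r ^ 3)) ≤ P ^ 2 * (r * (1 / r ^ 3)) := by gcongr
            _ = (P / r) ^ 2 := by field_simp
        · rw [mul_pow, mul_pow, div_pow, Real.sq_sqrt hr.le, Real.sq_sqrt hq0.le]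
          exact le_of_eq (by field_simp)
    _ ≤ 36 * (K * (1 + Real.log P)) ^ 2 * (P / r + r * √r * (1 / √q)) ^ 2 := by
        gcongr
        rw [add_sq]
        linarith [show 0 ≤ 2 * (P / r) * (r * √r * (1 / √q)) by positivity]
    _ = _ := by ring

theorem sum_norm_sum_e_fwdDiff_le_of_fwdDiff_three {r : ℝ} (hnP : n ≤ P) (hP : 1 ≤ P) (hr : 0 < r)
    (hK : 1 ≤ K) (h₃ : ∀ k, k + 3 < n → Δ_[1] ^[3] f k ∈ Set.Icc (1 / r ^ 3) (K * (1 / r ^ 3)))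
    (h₄ : ∀ k, k + 4 < n → Δ_[1] ^[4] f k ≤ 0) {Q : ℕ} (hQr : Q ≤ r) (hrQ : r / 2 ≤ Q) :
    ∑ q ∈ Ioc 0 Q, ‖∑ k ∈ range (n - q), e (Δ_[q] f k)‖ ≤
      6 * (K * (1 + Real.log P)) * (Q * (P / r) + 3 * (r * Q)) := by
  have hlog := Real.log_nonneg hP
  set L := K * (1 + Real.log P)
  have hsqrt : √r * √Q ≤ 3 / 2 * Q := by
    rw [← sq_le_sq₀ (by positivity) (by positivity), mul_pow, Real.sq_sqrt hr.le,
      Real.sq_sqrt Q.cast_nonneg]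
    nlinarith
  calc _ ≤ ∑ q ∈ Ioc 0 Q, 6 * L * (P / r + r * √r * (1 / √q)) := by
        refine sum_le_sum fun q hq ↦ ?_
        obtain ⟨hq1, hqQ⟩ := mem_Ioc.1 hq
        exact norm_sum_e_fwdDiff_le_of_fwdDiff_three hnP hP hr hK h₃ h₄ hq1
          (hQr.trans' (by gcongr))
    _ = 6 * L * (Q * (P / r) + r * √r * ∑ q ∈ Ioc 0 Q, 1 / √(q : ℝ)) := by
        rw [← mul_sum, sum_add_distrib, ← mul_sum, sum_const, Nat.card_Ioc, tsub_zero,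
          nsmul_eq_mul]
    _ ≤ 6 * L * (Q * (P / r) + r * √r * (2 * √Q)) := by
        gcongr
        exact sum_Ioc_one_div_sqrt_le Q
    _ = 6 * L * (Q * (P / r) + 2 * (r * (√r * √Q))) := by ring
    _ ≤ 6 * L * (Q * (P / r) + 2 * (r * (3 / 2 * Q))) := by gcongr
    _ = _ := by ring

theorem norm_sum_e_sq_le_of_fwdDiff_three {r : ℝ} (hnP : n ≤ P) (hP : 1 ≤ P) (hr : 0 < r)
    (hK : 1 ≤ K) (h₃ : ∀ k, k + 3 < n → Δ_[1] ^[3] f k ∈ Set.Icc (1 / r ^ 3) (K * (1 / r ^ 3)))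
    (h₄ : ∀ k, k + 4 < n → Δ_[1] ^[4] f k ≤ 0) :
    ‖∑ k ∈ range n, e (f k)‖ ^ 2 ≤ 80 * (K * (1 + Real.log P)) * (P ^ 2 / r + P * r) := by
  have hL : 1 ≤ K * (1 + Real.log P) :=
    one_le_mul_of_one_le_of_one_le hK (by linarith [Real.log_nonneg hP])
  have htriv (h : P ^ 2 ≤ P ^ 2 / r + P * r) : ‖∑ k ∈ range n, e (f k)‖ ^ 2 ≤
      80 * (K * (1 + Real.log P)) * (P ^ 2 / r + P * r) :=
    calc _ ≤ P ^ 2 := norm_sum_e_sq_le_sq hnP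
      _ ≤ _ := h.trans (le_mul_of_one_le_left (by positivity) (by linarith))
  rcases le_or_gt r 1 with hr1 | hr1
  · exact htriv ((le_div_self (by positivity) hr hr1).trans (by simpa using by positivity))
  rcases le_or_gt P r with hPr | hrP
  · exact htriv (by nlinarith [show 0 ≤ P ^ 2 / r by positivity])
  have hfloor : (⌊r⌋₊ : ℝ) ≤ r := Nat.floor_le hr.le
  have hQ : 1 ≤ ⌊r⌋₊ := (Nat.one_le_floor_iff r).2 hr1.le
  have hhalf : r / 2 ≤ ⌊r⌋₊ := (Nat.div_two_lt_floor hr1.le).le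
  have hinner := sum_norm_sum_e_fwdDiff_le_of_fwdDiff_three hnP hP hr hK h₃ h₄ hfloor hhalf
  set L := K * (1 + Real.log P)
  set Q := ⌊r⌋₊
  calc _ ≤ 2 * P / Q * (P + 2 * (6 * L * (Q * (P / r) + 3 * (r * Q)))) :=
        (norm_sum_e_sq_le_fwdDiff hnP hQ (hfloor.trans hrP.le)).trans (by gcongr)
    _ = 2 * P ^ 2 / Q + 24 * L * (P ^ 2 / r + 3 * (P * r)) := by field_simp; ring
    _ ≤ 2 * P ^ 2 / (r / 2) + 24 * L * (P ^ 2 / r + 3 * (P * r)) := by gcongr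
    _ = 4 * (P ^ 2 / r) + 24 * L * (P ^ 2 / r + 3 * (P * r)) := by field_simp; ring
    _ ≤ 4 * L * (P ^ 2 / r) + 24 * L * (P ^ 2 / r + 3 * (P * r)) := by
        gcongr
        linarith
    _ ≤ 80 * L * (P ^ 2 / r + P * r) := by
        have : 0 ≤ L * (P ^ 2 / r) := by positivity
        have : 0 ≤ L * (P * r) := by positivity
        linarith

end DerivativeTests

section Phase

theorem hasDerivAt_fwdDiff_iter {ψ ψ' : ℝ → ℝ} {x₀ : ℝ} (h : ∀ y > x₀, HasDerivAt ψ (ψ' y) y)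
    (j : ℕ) : ∀ y > x₀, HasDerivAt (Δ_[1] ^[j] ψ) (Δ_[1] ^[j] ψ' y) y := by
  induction j with
  | zero => exact h
  | succ j ih =>
    intro y hy
    rw [Function.iterate_succ_apply', Function.iterate_succ_apply']
    exact ((ih (y + 1) (by linarith)).comp_add_const y 1).sub (ih y hy)

theorem exists_fwdDiff_iter_eq {Φ : ℕ → ℝ → ℝ} {x₀ : ℝ}
    (hΦ : ∀ i, ∀ y > x₀, HasDerivAt (Φ i) (Φ (i + 1) y) y) (i j : ℕ) {x : ℝ} (hx : x₀ < x) :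
    ∃ ξ ∈ Set.Icc x (x + j), Δ_[1] ^[j] (Φ i) x = Φ (i + j) ξ := by
  induction j generalizing i x with
  | zero => exact ⟨x, by simp, rfl⟩
  | succ j ih =>
    have hderiv := hasDerivAt_fwdDiff_iter (hΦ i) j
    obtain ⟨y, hy, hslope⟩ := exists_hasDerivAt_eq_slope (Δ_[1] ^[j] (Φ i))
      (Δ_[1] ^[j] (Φ (i + 1))) (lt_add_one x)
      (fun y hy ↦ (hderiv y (by linarith [hy.1])).continuousAt.continuousWithinAt)
      (fun y hy ↦ hderiv y (by linarith [hy.1]))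
    obtain ⟨ξ, hξ, hmean⟩ := ih (i + 1) (hx.trans hy.1)
    refine ⟨ξ, ⟨hy.1.le.trans hξ.1, ?_⟩, ?_⟩
    · push_cast
      linarith [hξ.2, hy.2]
    · rw [Function.iterate_succ_apply', ← add_assoc, add_right_comm, ← hmean, hslope, fwdDiff,
        add_sub_cancel_left, div_one]

theorem fwdDiff_iter_comp_natCast (ψ : ℝ → ℝ) (u : ℝ) (j k : ℕ) :
    Δ_[1] ^[j] (fun k : ℕ ↦ ψ (u + k)) k = Δ_[1] ^[j] ψ (u + k) := by
  induction j generalizing k with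
  | zero => rfl
  | succ j ih =>
    simp only [Function.iterate_succ_apply', fwdDiff, ih]
    push_cast
    rw [add_assoc]

/-- The `i`-th derivative of the phase `u ↦ a * u ^ γ - b * u ^ c` on the positive half-line. -/
noncomputable def phaseDeriv (a b γ c : ℝ) (i : ℕ) (u : ℝ) : ℝ :=
  a * (descPochhammer ℝ i).eval γ * u ^ (γ - i) - b * (descPochhammer ℝ i).eval c * u ^ (c - i)

variable {a b γ c κ : ℝ}

theorem phaseDeriv_zero (a b γ c u : ℝ) : phaseDeriv a b γ c 0 u = a * u ^ γ - b * u ^ c := by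
  simp [phaseDeriv]

theorem hasDerivAt_phaseDeriv (a b γ c : ℝ) (i : ℕ) {u : ℝ} (hu : 0 < u) :
    HasDerivAt (phaseDeriv a b γ c i) (phaseDeriv a b γ c (i + 1) u) u := by
  have hterm (x s : ℝ) : HasDerivAt (fun u ↦ x * (descPochhammer ℝ i).eval s * u ^ (s - i))
      (x * (descPochhammer ℝ (i + 1)).eval s * u ^ (s - (i + 1 : ℕ))) u := by
    refine ((Real.hasDerivAt_rpow_const (p := s - i) (Or.inl hu.ne')).const_mul
      (x * (descPochhammer ℝ i).eval s)).congr_deriv ?_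
    rw [descPochhammer_succ_eval, show s - (i + 1 : ℕ) = s - i - 1 by push_cast; ring]
    ring
  exact (hterm a γ).sub (hterm b c)

theorem abs_phaseDeriv_sub_le {u : ℝ} (hu : 0 < u) (hb : |b| * u ^ (c - γ) ≤ κ * a) (i : ℕ) :
    |phaseDeriv a b γ c i u - (descPochhammer ℝ i).eval γ * (a * u ^ (γ - i))| ≤
      κ * |(descPochhammer ℝ i).eval c| * (a * u ^ (γ - i)) := by
  have hdiff : phaseDeriv a b γ c i u - (descPochhammer ℝ i).eval γ * (a * u ^ (γ - i)) =
      -(b * u ^ (c - γ) * ((descPochhammer ℝ i).eval c * u ^ (γ - i))) := by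
    rw [phaseDeriv, show c - i = c - γ + (γ - i) by ring, Real.rpow_add hu]
    ring
  calc _ = |b| * u ^ (c - γ) * (|(descPochhammer ℝ i).eval c| * u ^ (γ - i)) := by
        simp only [hdiff, abs_neg, abs_mul, abs_of_pos (Real.rpow_pos_of_pos hu _)]
    _ ≤ κ * a * (|(descPochhammer ℝ i).eval c| * u ^ (γ - i)) := by gcongr
    _ = _ := by ring

theorem eval_descPochhammer_three (s : ℝ) :
    (descPochhammer ℝ 3).eval s = s * (s - 1) * (s - 2) := by
  simp [descPochhammer_succ_eval]

theorem eval_descPochhammer_three_pos (hγ₀ : 0 < γ) (hγ₁ : γ < 1) :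
    0 < (descPochhammer ℝ 3).eval γ := by
  rw [eval_descPochhammer_three, mul_assoc]
  exact mul_pos hγ₀ (mul_pos_of_neg_of_neg (by linarith) (by linarith))

theorem rpow_sub_three_mem_Icc {P u : ℝ} (hγ₀ : 0 < γ) (hγ₁ : γ < 1) (hP : 0 < P)
    (hu : u ∈ Set.Icc P (4 * P)) :
    u ^ (γ - 3) ∈ Set.Icc (P ^ (γ - 3) / 64) (P ^ (γ - 3)) := by
  refine ⟨?_, Real.rpow_le_rpow_of_nonpos hP hu.1 (by linarith)⟩
  calc P ^ (γ - 3) / 64 = 4 ^ (-3 : ℝ) * P ^ (γ - 3) := by norm_num; ring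
    _ ≤ 4 ^ (γ - 3) * P ^ (γ - 3) := by gcongr <;> linarith
    _ = (4 * P) ^ (γ - 3) := (Real.mul_rpow (by norm_num) hP.le).symm
    _ ≤ u ^ (γ - 3) := Real.rpow_le_rpow_of_nonpos (hP.trans_le hu.1) hu.2 (by linarith)

theorem phaseDeriv_three_mem_Icc {P u : ℝ} (hγ₀ : 0 < γ) (hγ₁ : γ < 1) (ha : 0 < a) (hP : 0 < P)
    (hκ : κ * |(descPochhammer ℝ 3).eval c| ≤ (descPochhammer ℝ 3).eval γ / 2)
    (hu : u ∈ Set.Icc P (4 * P)) (hb : |b| * u ^ (c - γ) ≤ κ * a) :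
    phaseDeriv a b γ c 3 u ∈ Set.Icc ((descPochhammer ℝ 3).eval γ * (a * P ^ (γ - 3)) / 128)
      (2 * ((descPochhammer ℝ 3).eval γ * (a * P ^ (γ - 3)))) := by
  have hu₀ : 0 < u := hP.trans_le hu.1
  have hw := eval_descPochhammer_three_pos hγ₀ hγ₁
  have hmain := abs_le.1 (abs_phaseDeriv_sub_le hu₀ hb 3)
  obtain ⟨hlower, hupper⟩ := rpow_sub_three_mem_Icc hγ₀ hγ₁ hP hu
  set w := (descPochhammer ℝ 3).eval γ
  push_cast at hmain
  have herr : κ * |(descPochhammer ℝ 3).eval c| * (a * u ^ (γ - 3)) ≤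
      w / 2 * (a * u ^ (γ - 3)) := by gcongr
  have hlower' : w * (a * (P ^ (γ - 3) / 64)) ≤ w * (a * u ^ (γ - 3)) := by gcongr
  have hupper' : w * (a * u ^ (γ - 3)) ≤ w * (a * P ^ (γ - 3)) := by gcongr
  have : 0 ≤ w * (a * P ^ (γ - 3)) := by positivity
  constructor <;> linarith [hmain.1, hmain.2]

theorem phaseDeriv_four_nonpos {u : ℝ} (hγ₀ : 0 < γ) (hγ₁ : γ < 1) (ha : 0 < a) (hu : 0 < u)
    (hκ : κ * |(descPochhammer ℝ 4).eval c| ≤ (descPochhammer ℝ 3).eval γ / 2)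
    (hb : |b| * u ^ (c - γ) ≤ κ * a) : phaseDeriv a b γ c 4 u ≤ 0 := by
  have hw := eval_descPochhammer_three_pos hγ₀ hγ₁
  have hmain := (abs_le.1 (abs_phaseDeriv_sub_le hu hb 4)).2
  rw [descPochhammer_succ_eval 3 γ] at hmain
  set w := (descPochhammer ℝ 3).eval γ
  have hpos : 0 ≤ a * u ^ (γ - (4 : ℕ)) := by positivity
  have hcoeff : w * (γ - (3 : ℕ)) + κ * |(descPochhammer ℝ 4).eval c| ≤ 0 := by
    push_cast
    nlinarith
  linarith [mul_nonpos_of_nonpos_of_nonneg hcoeff hpos]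

theorem exists_fwdDiff_iter_phase_eq {P Q u₀ : ℝ} {n j k : ℕ} (hP : 0 < P)
    (hrange : ∀ k < n, u₀ + k ∈ Set.Icc P Q) (hk : k + j < n) :
    ∃ ξ ∈ Set.Icc P Q,
      Δ_[1] ^[j] (fun k : ℕ ↦ phaseDeriv a b γ c 0 (u₀ + k)) k = phaseDeriv a b γ c j ξ := by
  have hleft := (hrange k (by lia)).1
  have hright := (hrange (k + j) hk).2
  obtain ⟨ξ, hξ, hval⟩ := exists_fwdDiff_iter_eq
    (fun i y hy ↦ hasDerivAt_phaseDeriv a b γ c i hy) 0 j (hP.trans_le hleft)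
  refine ⟨ξ, ⟨hleft.trans hξ.1, hξ.2.trans ?_⟩, ?_⟩
  · push_cast at hright
    linarith
  · rw [fwdDiff_iter_comp_natCast, hval, zero_add]

theorem cast_le_of_forall_add_mem_Icc {P Q u₀ : ℝ} {n : ℕ} (hP : 1 ≤ P) (hPQ : P ≤ Q)
    (hrange : ∀ k < n, u₀ + k ∈ Set.Icc P Q) : (n : ℝ) ≤ Q := by
  rcases n with _ | n
  · simp only [Nat.cast_zero]
    linarith
  · have hfirst := (hrange 0 (by lia)).1
    have hlast := (hrange n (by lia)).2
    push_cast at hfirst ⊢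
    linarith

theorem norm_sum_e_phase_sq_le {P r u₀ : ℝ} {n : ℕ} (hγ₀ : 0 < γ) (hγ₁ : γ < 1) (hγc : γ ≤ c)
    (hκ₃ : κ * |(descPochhammer ℝ 3).eval c| ≤ (descPochhammer ℝ 3).eval γ / 2)
    (hκ₄ : κ * |(descPochhammer ℝ 4).eval c| ≤ (descPochhammer ℝ 3).eval γ / 2)
    (ha : 0 < a) (hP : 1 ≤ P) (hr : 0 < r)
    (hscale : (descPochhammer ℝ 3).eval γ * (a * P ^ (γ - 3)) / 128 = 1 / r ^ 3)
    (hb : |b| * (4 * P) ^ (c - γ) ≤ κ * a) (hrange : ∀ k < n, u₀ + k ∈ Set.Icc P (4 * P)) :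
    ‖∑ k ∈ range n, e (a * (u₀ + k) ^ γ - b * (u₀ + k) ^ c)‖ ^ 2 ≤
      80 * (256 * (1 + Real.log (4 * P))) * ((4 * P) ^ 2 / r + 4 * P * r) := by
  have hP₀ : 0 < P := by linarith
  have hb' {u : ℝ} (hu : u ∈ Set.Icc P (4 * P)) : |b| * u ^ (c - γ) ≤ κ * a :=
    hb.trans' (by gcongr; exacts [(hP₀.trans_le hu.1).le, hu.2])
  have htest := norm_sum_e_sq_le_of_fwdDiff_three (r := r) (K := 256)
    (f := fun k ↦ phaseDeriv a b γ c 0 (u₀ + k))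
    (cast_le_of_forall_add_mem_Icc hP (by linarith) hrange) (by linarith) hr (by norm_num)
    (fun k hk ↦ by
      obtain ⟨ξ, hξ, hval⟩ := exists_fwdDiff_iter_phase_eq hP₀ hrange hk
      rw [hval, ← hscale]
      convert phaseDeriv_three_mem_Icc hγ₀ hγ₁ ha hP₀ hκ₃ hξ (hb' hξ) using 2
      ring)
    (fun k hk ↦ by
      obtain ⟨ξ, hξ, hval⟩ := exists_fwdDiff_iter_phase_eq hP₀ hrange hk
      rw [hval]
      exact phaseDeriv_four_nonpos hγ₀ hγ₁ ha (hP₀.trans_le hξ.1) hκ₄ (hb' hξ))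
  simpa only [phaseDeriv_zero] using htest

theorem one_add_log_four_mul_le {P : ℝ} (hP : 1 ≤ P) :
    1 + Real.log (4 * P) ≤ 3 * (1 + Real.log P) := by
  rw [Real.log_mul (by norm_num) (by positivity), show (4 : ℝ) = 2 ^ 2 by norm_num, Real.log_pow]
  push_cast
  linarith [Real.log_two_lt_d9, Real.log_nonneg hP]

theorem exists_norm_sum_e_phase_sq_le (hγ₀ : 0 < γ) (hγ₁ : γ < 1) (hγc : γ ≤ c) :
    ∃ C > 0, ∃ κ > 0, ∀ (a b P Y u₀ : ℝ) (n : ℕ), 0 < a → 1 ≤ P → 0 < Y → Y ^ 3 = a * P ^ γ →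
      |b| * (4 * P) ^ (c - γ) ≤ κ * a → (∀ k < n, u₀ + k ∈ Set.Icc P (4 * P)) →
      ‖∑ k ∈ range n, e (a * (u₀ + k) ^ γ - b * (u₀ + k) ^ c)‖ ^ 2 ≤
        C * (1 + Real.log P) * (P * Y + P ^ 2 / Y) := by
  have hw := eval_descPochhammer_three_pos hγ₀ hγ₁
  set w := (descPochhammer ℝ 3).eval γ
  set v := |(descPochhammer ℝ 3).eval c| + |(descPochhammer ℝ 4).eval c| + 1
  have hκ {x : ℝ} (hx : x ≤ v) : w / 2 / v * x ≤ w / 2 := by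
    rw [div_mul_eq_mul_div]
    exact div_le_of_le_mul₀ (by positivity) (by positivity) (by gcongr)
  set ρ := (128 / w) ^ (1 / 3 : ℝ) with hρ
  have hρ₃ : ρ ^ 3 = 128 / w := by
    rw [hρ, ← Real.rpow_natCast, ← Real.rpow_mul (by positivity)]
    norm_num
  have hρ₀ : 0 < ρ := by positivity
  refine ⟨80 * 256 * 3 * (16 / ρ + 4 * ρ), by positivity, w / 2 / v, by positivity, ?_⟩
  intro a b P Y u₀ n ha hP hY hY₃ hb hrange
  have hP₀ : 0 < P := by linarith
  have hlog := Real.log_nonneg hP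
  have hscale : w * (a * P ^ (γ - 3)) / 128 = 1 / (ρ * (P / Y)) ^ 3 := by
    rw [mul_pow, div_pow, hρ₃, hY₃, Real.rpow_sub hP₀, ← Nat.cast_ofNat, Real.rpow_natCast]
    field_simp
  calc _ ≤ 80 * (256 * (1 + Real.log (4 * P))) *
        ((4 * P) ^ 2 / (ρ * (P / Y)) + 4 * P * (ρ * (P / Y))) :=
        norm_sum_e_phase_sq_le hγ₀ hγ₁ hγc (hκ (by grind)) (hκ (by grind)) ha hP
          (by positivity) hscale hb hrange
    _ ≤ 80 * (256 * (3 * (1 + Real.log P))) *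
        ((4 * P) ^ 2 / (ρ * (P / Y)) + 4 * P * (ρ * (P / Y))) := by
        gcongr
        exact one_add_log_four_mul_le hP
    _ = 80 * (256 * (3 * (1 + Real.log P))) * (16 / ρ * (P * Y) + 4 * ρ * (P ^ 2 / Y)) := by
        field_simp
        ring
    _ ≤ 80 * (256 * (3 * (1 + Real.log P))) *
        ((16 / ρ + 4 * ρ) * (P * Y) + (16 / ρ + 4 * ρ) * (P ^ 2 / Y)) := by
        gcongr
        · exact le_add_of_nonneg_right (by positivity)
        · exact le_add_of_nonneg_left (by positivity)
    _ = _ := by ring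

end Phase

section ArithmeticProgression

theorem exists_filter_modEq_eq_image (A B : ℕ) {d : ℕ} (hd : 0 < d) (r : ℕ) :
    ∃ m n : ℕ, {k ∈ Ioc A B | k ≡ r [MOD d]} = (range n).image (m + d * ·) := by
  rcases {k ∈ Ioc A B | k ≡ r [MOD d]}.eq_empty_or_nonempty with hempty | hne
  · exact ⟨0, 0, by rw [hempty, range_zero, image_empty]⟩
  obtain ⟨m, hm, hmin⟩ := exists_min_image _ id hne
  obtain ⟨hmIoc, hmr⟩ := mem_filter.1 hm
  rw [mem_Ioc] at hmIoc
  refine ⟨m, (B - m) / d + 1, ?_⟩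
  ext k
  simp only [mem_filter, mem_image, mem_range, mem_Ioc, Nat.lt_succ_iff, Nat.le_div_iff_mul_le hd]
  constructor
  · rintro ⟨hk, hkr⟩
    have hmk : m ≤ k := hmin k (mem_filter.2 ⟨mem_Ioc.2 hk, hkr⟩)
    obtain ⟨j, hj⟩ := (Nat.modEq_iff_dvd' hmk).1 (hmr.trans hkr.symm)
    exact ⟨j, by rw [mul_comm]; omega, by omega⟩
  · rintro ⟨j, hj, rfl⟩
    rw [mul_comm] at hj
    exact ⟨by omega, Nat.ModEq.trans (by simp [Nat.ModEq]) hmr⟩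

theorem card_filter_modEq_le {A B d : ℕ} (hAB : A ≤ B) (hd : 0 < d) (r : ℕ) :
    (#{k ∈ Ioc A B | k ≡ r [MOD d]} : ℝ) ≤ ((B : ℝ) - A) / d + 1 := by
  have hd₀ : (0 : ℚ) < d := Nat.cast_pos.2 hd
  have hfloor : (max (⌊((B : ℚ) - r) / d⌋ - ⌊((A : ℚ) - r) / d⌋) 0 : ℤ) ≤
      ((B : ℚ) - A) / d + 1 := by
    have hB := Int.floor_le (((B : ℚ) - r) / d)
    have hA := Int.lt_floor_add_one (((A : ℚ) - r) / d)
    have hnonneg : 0 ≤ ((B : ℚ) - A) / d :=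
      div_nonneg (sub_nonneg.2 (Nat.cast_le.2 hAB)) hd₀.le
    have hsub : ((B : ℚ) - A) / d = ((B : ℚ) - r) / d - ((A : ℚ) - r) / d := by ring
    push_cast
    exact max_le (by linarith) (by linarith)
  rw [← Nat.Ioc_filter_modEq_card A B hd r] at hfloor
  have hreal := (Rat.cast_le (K := ℝ)).2 hfloor
  push_cast at hreal
  exact hreal

theorem e_mul_rpow_sub_mul_rpow_add_mul {d : ℝ} (hd : 0 < d) {m j : ℝ} (hm : 0 ≤ m) (hj : 0 ≤ j)
    (α β γ c : ℝ) :
    e (α * (m + d * j) ^ γ - β * (m + d * j) ^ c) =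
      e (α * d ^ γ * (m / d + j) ^ γ - β * d ^ c * (m / d + j) ^ c) := by
  have hscale : m + d * j = d * (m / d + j) := by field_simp
  rw [hscale, Real.mul_rpow hd.le (by positivity), Real.mul_rpow hd.le (by positivity), mul_assoc,
    mul_assoc]

variable {γ c : ℝ}

theorem exists_norm_sum_e_modEq_sq_le_of_pos (hγ₀ : 0 < γ) (hγ₁ : γ < 1) (hγc : γ ≤ c) :
    ∃ C > 0, ∃ κ > 0, ∀ (α β M Y : ℝ) (A B d r : ℕ), 0 < α → 0 < d → d ≤ M → 0 < Y →
      Y ^ 3 = α * M ^ γ → |β| * (4 * M) ^ (c - γ) ≤ κ * α →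
      (∀ m ∈ Ioc A B, (m : ℝ) ∈ Set.Icc M (4 * M)) →
      ‖∑ m ∈ Ioc A B with m ≡ r [MOD d], e (α * m ^ γ - β * m ^ c)‖ ^ 2 ≤
        C * (1 + Real.log M) * (M / d * Y + (M / d) ^ 2 / Y) := by
  obtain ⟨C, hC, κ, hκ, hbound⟩ := exists_norm_sum_e_phase_sq_le hγ₀ hγ₁ hγc
  refine ⟨C, hC, κ, hκ, ?_⟩
  intro α β M Y A B d r hα hd hdM hY hY₃ hβ hrange
  have hd₀ : (0 : ℝ) < d := Nat.cast_pos.2 hd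
  have hM₀ : 0 < M := hd₀.trans_le hdM
  obtain ⟨m₀, n, himage⟩ := exists_filter_modEq_eq_image A B hd r
  have hmem (k : ℕ) (hk : k < n) : (m₀ : ℝ) / d + k ∈ Set.Icc (M / d) (4 * (M / d)) := by
    have himg : m₀ + d * k ∈ (range n).image (m₀ + d * ·) :=
      mem_image_of_mem _ (mem_range.2 hk)
    have h := hrange _ (mem_filter.1 (himage ▸ himg)).1
    push_cast at h
    rw [← mul_div_assoc, show (m₀ : ℝ) / d + k = (m₀ + d * k) / d by field_simp]
    exact ⟨by gcongr; exact h.1, by gcongr; exact h.2⟩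
  have hβ' : |β * d ^ c| * (4 * (M / d)) ^ (c - γ) ≤ κ * (α * d ^ γ) := by
    have hd_rpow : (d : ℝ) ^ c = d ^ γ * d ^ (c - γ) := by rw [← Real.rpow_add hd₀]; ring_nf
    calc |β * d ^ c| * (4 * (M / d)) ^ (c - γ) = |β| * (4 * M) ^ (c - γ) * d ^ γ := by
          rw [abs_mul, abs_of_pos (Real.rpow_pos_of_pos hd₀ c), ← mul_div_assoc,
            Real.div_rpow (by positivity) hd₀.le, hd_rpow]
          field_simp
      _ ≤ κ * α * d ^ γ := by gcongr
      _ = κ * (α * d ^ γ) := mul_assoc _ _ _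
  rw [himage, sum_image fun i _ j _ hij ↦ Nat.eq_of_mul_eq_mul_left hd (Nat.add_left_cancel hij)]
  push_cast
  simp only [e_mul_rpow_sub_mul_rpow_add_mul hd₀ m₀.cast_nonneg (Nat.cast_nonneg _)]
  refine (hbound (α * d ^ γ) (β * d ^ c) (M / d) Y (m₀ / d) n (by positivity)
    ((one_le_div hd₀).2 hdM) hY ?_ hβ' hmem).trans ?_
  · rw [hY₃, Real.div_rpow hM₀.le hd₀.le]
    field_simp
  · gcongr
    exact div_le_self hM₀.le (Nat.one_le_cast.2 hd)

theorem exists_norm_sum_e_modEq_sq_le (hγ₀ : 0 < γ) (hγ₁ : γ < 1) (hγc : γ ≤ c) :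
    ∃ C > 0, ∃ κ > 0, ∀ (α β M Y : ℝ) (A B d r : ℕ), α ≠ 0 → 0 < d → d ≤ M → 0 < Y →
      Y ^ 3 = |α| * M ^ γ → |β| * (4 * M) ^ (c - γ) ≤ κ * |α| →
      (∀ m ∈ Ioc A B, (m : ℝ) ∈ Set.Icc M (4 * M)) →
      ‖∑ m ∈ Ioc A B with m ≡ r [MOD d], e (β * m ^ c - α * m ^ γ)‖ ^ 2 ≤
        C * (1 + Real.log M) * (M / d * Y + (M / d) ^ 2 / Y) := by
  obtain ⟨C, hC, κ, hκ, hbound⟩ := exists_norm_sum_e_modEq_sq_le_of_pos hγ₀ hγ₁ hγc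
  refine ⟨C, hC, κ, hκ, ?_⟩
  intro α β M Y A B d r hα hd hdM hY hY₃ hβ hrange
  rcases hα.lt_or_gt with hneg | hpos
  · rw [abs_of_neg hneg] at hY₃ hβ
    have h := hbound (-α) (-β) M Y A B d r (neg_pos.2 hneg) hd hdM hY hY₃ (by rwa [abs_neg]) hrange
    simpa only [neg_mul, sub_neg_eq_add, neg_add_eq_sub] using h
  · rw [abs_of_pos hpos] at hY₃ hβ
    have h := hbound α β M Y A B d r hpos hd hdM hY hY₃ hβ hrange
    rw [← norm_sum_e_neg] at h
    simpa only [neg_sub] using h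

theorem eventually_const_mul_one_add_log_le_rpow (C : ℝ) {s : ℝ} (hs : 0 < s) :
    ∀ᶠ N : ℝ in atTop, C * (1 + Real.log N) ≤ N ^ s := by
  have hlittle : (fun N : ℝ ↦ C * (1 + Real.log N)) =o[atTop] fun N : ℝ ↦ N ^ s := by
    refine (Asymptotics.IsLittleO.add ?_ (isLittleO_log_rpow_atTop hs)).const_mul_left C
    exact Asymptotics.isLittleO_const_left.2
      (Or.inr (tendsto_norm_atTop_atTop.comp (tendsto_rpow_atTop hs)))
  filter_upwards [hlittle.bound one_pos, eventually_ge_atTop 0] with N hN hN₀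
  rw [one_mul, Real.norm_of_nonneg (Real.rpow_nonneg hN₀ s)] at hN
  exact (le_abs_self _).trans hN

theorem exists_pow_three_eq_of_le {b x z : ℝ} (hb : 0 ≤ b) (hz : 0 ≤ z) (hlower : b ^ 3 ≤ x)
    (hupper : x * b ^ 3 ≤ z ^ 3) : ∃ Y, Y ^ 3 = x ∧ b ≤ Y ∧ Y * b ≤ z := by
  have hx : 0 ≤ x := hlower.trans' (by positivity)
  have hY : (x ^ (3⁻¹ : ℝ)) ^ 3 = x := Real.rpow_inv_natCast_pow (n := 3) hx three_ne_zero
  exact ⟨x ^ (3⁻¹ : ℝ), hY,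
    le_of_pow_le_pow_left₀ three_ne_zero (by positivity) (by rwa [hY]),
    le_of_pow_le_pow_left₀ three_ne_zero hz (by rwa [mul_pow, hY])⟩

theorem mul_four_mul_rpow_le {x y u M N K κ s : ℝ} (hx : 0 ≤ x) (hM : 0 ≤ M) (hN : 0 < N)
    (hκ : 0 < κ) (hNs : 4 ^ u * K / κ ≤ N ^ s) (hy : y * M ^ u ≤ K * N ^ (-s) * x) :
    y * (4 * M) ^ u ≤ κ * x :=
  calc y * (4 * M) ^ u = 4 ^ u * (y * M ^ u) := by
        rw [Real.mul_rpow (by norm_num) hM]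
        ring
    _ ≤ 4 ^ u * (K * N ^ (-s) * x) := by gcongr
    _ = 4 ^ u * K / κ * (κ * N ^ (-s) * x) := by field_simp
    _ ≤ N ^ s * (κ * N ^ (-s) * x) := by gcongr
    _ = κ * x := by
        rw [Real.rpow_neg hN.le]
        field_simp

/-- The choice `Y = (|α| M ^ γ) ^ (1 / 3)` balances the two terms of the third derivative test. -/
theorem eventually_norm_sum_e_modEq_le (hγ₀ : 0 < γ) (hγ₁ : γ < 1) (hγc : γ ≤ c) {σ s : ℝ}
    (hσ : 0 < σ) (hs : 0 < s) (K : ℝ) :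
    ∀ᶠ N : ℝ in atTop, ∀ (α β M : ℝ) (A B d r : ℕ), 0 < d → d ≤ M → M ≤ N →
      N ^ (15 * σ) ≤ |α| * M ^ γ → |α| * M ^ γ * N ^ (15 * σ) ≤ (M / d) ^ 3 →
      |β| * M ^ (c - γ) ≤ K * N ^ (-s) * |α| →
      (∀ m ∈ Ioc A B, (m : ℝ) ∈ Set.Icc M (4 * M)) →
      ‖∑ m ∈ Ioc A B with m ≡ r [MOD d], e (β * m ^ c - α * m ^ γ)‖ ≤
        M / d * N ^ (-(2 * σ)) := by
  obtain ⟨C, hC, κ, hκ, hbound⟩ := exists_norm_sum_e_modEq_sq_le hγ₀ hγ₁ hγc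
  filter_upwards [eventually_const_mul_one_add_log_le_rpow (2 * C) hσ, eventually_ge_atTop 1,
    (tendsto_rpow_atTop hs).eventually_ge_atTop (4 ^ (c - γ) * K / κ)] with N hlog hN₁ hNs
  intro α β M A B d r hd hdM hMN hlower hupper hβ hrange
  have hN₀ : 0 < N := by linarith
  have hd₀ : (0 : ℝ) < d := Nat.cast_pos.2 hd
  have hM₀ : 0 < M := hd₀.trans_le hdM
  have hα : α ≠ 0 := by
    rintro rfl
    have : 0 < N ^ (15 * σ) := by positivity
    simp only [abs_zero, zero_mul] at hlower
    linarith
  have hcube : (N ^ (5 * σ)) ^ 3 = N ^ (15 * σ) := by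
    rw [← Real.rpow_mul_natCast hN₀.le]
    ring_nf
  rw [← hcube] at hlower hupper
  obtain ⟨Y, hY₃, hYlower, hYupper⟩ :=
    exists_pow_three_eq_of_le (by positivity) (by positivity) hlower hupper
  have hY₀ : 0 < Y := (by positivity : 0 < N ^ (5 * σ)).trans_le hYlower
  refine le_of_sq_le_sq ?_ (by positivity)
  calc _ ≤ C * (1 + Real.log M) * (M / d * Y + (M / d) ^ 2 / Y) :=
        hbound α β M Y A B d r hα hd hdM hY₀ hY₃
          (mul_four_mul_rpow_le (abs_nonneg α) hM₀.le hN₀ hκ hNs hβ) hrange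
    _ ≤ C * (1 + Real.log N) * ((M / d) ^ 2 / N ^ (5 * σ) + (M / d) ^ 2 / N ^ (5 * σ)) := by
        have hlogM : 0 ≤ Real.log M := Real.log_nonneg ((Nat.one_le_cast.2 hd).trans hdM)
        have hlogMN : Real.log M ≤ Real.log N := Real.log_le_log hM₀ hMN
        have hlogN : 0 ≤ C * (1 + Real.log N) := by nlinarith
        gcongr
        rw [le_div_iff₀ (by positivity), mul_assoc, sq]
        gcongr
    _ = 2 * C * (1 + Real.log N) * ((M / d) ^ 2 / N ^ (5 * σ)) := by ring
    _ ≤ N ^ σ * ((M / d) ^ 2 / N ^ (5 * σ)) := by gcongr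
    _ = (M / d * N ^ (-(2 * σ))) ^ 2 := by
        rw [mul_pow, ← Real.rpow_mul_natCast hN₀.le, ← mul_div_assoc, mul_comm, mul_div_assoc,
          ← Real.rpow_sub hN₀]
        ring_nf

end ArithmeticProgression

section TypeI

theorem coprime_of_dvd_mul_sub {a : ℤ} {d m k : ℕ} (hda : Int.gcd d a = 1)
    (hk : (d : ℤ) ∣ (m * k : ℕ) - a) : d.Coprime m := by
  have hgcd_dvd_a : (Nat.gcd d m : ℤ) ∣ a := by
    have hmul : (Nat.gcd d m : ℤ) ∣ (m * k : ℕ) :=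
      Int.natCast_dvd_natCast.2 ((Nat.gcd_dvd_right d m).mul_right k)
    simpa using dvd_sub hmul ((Int.natCast_dvd_natCast.2 (Nat.gcd_dvd_left d m)).trans hk)
  have hgcd := Int.dvd_coe_gcd (Int.natCast_dvd_natCast.2 (Nat.gcd_dvd_left d m)) hgcd_dvd_a
  rw [hda] at hgcd
  exact Nat.dvd_one.1 (Int.natCast_dvd_natCast.1 hgcd)

theorem dvd_sub_iff_of_modEq {a : ℤ} {d m n : ℕ} (h : m ≡ n [MOD d]) :
    (d : ℤ) ∣ m - a ↔ (d : ℤ) ∣ n - a := by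
  rw [← Int.modEq_iff_dvd, ← Int.modEq_iff_dvd]
  exact ⟨fun hm ↦ hm.trans (Int.natCast_modEq_iff.2 h),
    fun hn ↦ hn.trans (Int.natCast_modEq_iff.2 h).symm⟩

theorem dvd_mul_sub_iff_modEq {a : ℤ} {d m r : ℕ} (hda : Int.gcd d a = 1)
    (hr : (d : ℤ) ∣ (m * r : ℕ) - a) (k : ℕ) :
    (d : ℤ) ∣ (m * k : ℕ) - a ↔ k ≡ r [MOD d] := by
  refine ⟨fun hk ↦ ?_, fun hk ↦ (dvd_sub_iff_of_modEq (hk.mul_left m)).2 hr⟩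
  rw [← Int.modEq_iff_dvd] at hk hr
  exact Nat.ModEq.cancel_left_of_coprime (coprime_of_dvd_mul_sub hda (Int.modEq_iff_dvd.1 hr))
    (Int.natCast_modEq_iff.1 (hk.symm.trans hr))

theorem norm_sum_ite_dvd_mul_sub_le {a : ℤ} {d : ℕ} (hda : Int.gcd d a = 1) (m : ℕ)
    (s : Finset ℕ) (f : ℕ → ℂ) {C : ℝ} (hC : ∀ r, ‖∑ k ∈ s with k ≡ r [MOD d], f k‖ ≤ C) :
    ‖∑ k ∈ s, if (d : ℤ) ∣ (m * k : ℕ) - a then f k else 0‖ ≤ C := by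
  by_cases h : ∃ r : ℕ, (d : ℤ) ∣ (m * r : ℕ) - a
  · obtain ⟨r, hr⟩ := h
    simp only [dvd_mul_sub_iff_modEq hda hr, ← sum_filter, hC r]
  · push Not at h
    simpa only [h, if_false, sum_const_zero, norm_zero] using (norm_nonneg _).trans (hC 0)

/-- The summand of `G` belonging to a fixed `h` and a fixed divisor `d` of `n - a`. The frequency
`h` is allowed to be real. -/
noncomputable def weight (γ c t h : ℝ) (a : ℤ) (d n : ℕ) : ℂ :=
  if (d : ℤ) ∣ n - a then e (t * n ^ c - h * n ^ γ) else 0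

theorem weight_mul (γ c t h : ℝ) (a : ℤ) (d m k : ℕ) :
    weight γ c t h a d (m * k) =
      if (d : ℤ) ∣ (m * k : ℕ) - a then e (t * m ^ c * k ^ c - h * m ^ γ * k ^ γ) else 0 := by
  rw [weight]
  push_cast
  rw [Real.mul_rpow m.cast_nonneg k.cast_nonneg, Real.mul_rpow m.cast_nonneg k.cast_nonneg,
    mul_assoc, mul_assoc]

/-- The ranges of the parameters of `weight` around `N`: the divisor `d` is coprime to `a` and at
most `N ^ θ`, the frequency `h` is at most `N ^ σ`, and the perturbation `t n ^ c` is small. -/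
structure IsAdmissible (c σ θ N t h : ℝ) (a : ℤ) (d : ℕ) : Prop where
  abs_mul_rpow_le : |t| * N ^ c ≤ N ^ (1 / 3 : ℝ)
  one_le_freq : 1 ≤ h
  freq_le : h ≤ N ^ σ
  modulus_pos : 0 < d
  modulus_le : d ≤ N ^ θ
  gcd_eq_one : Int.gcd d a = 1

variable {γ c σ θ : ℝ}

theorem mul_rpow_mul_div_rpow {N m : ℝ} (hN : 0 < N) (hm : 0 < m) (h : ℝ) :
    h * m ^ γ * (N / m) ^ γ = h * N ^ γ := by
  rw [mul_assoc, ← Real.mul_rpow hm.le (by positivity), mul_div_cancel₀ N hm.ne']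

namespace IsAdmissible

variable {N t h : ℝ} {a : ℤ} {d : ℕ}

theorem freq_pos (hadm : IsAdmissible c σ θ N t h a d) : 0 < h :=
  zero_lt_one.trans_le hadm.one_le_freq

theorem abs_mul_rpow_mul_rpow_le (hadm : IsAdmissible c σ θ N t h a d) (hN : 0 < N) :
    |t| * N ^ c * N ^ (-γ) ≤ N ^ (-(γ - 1 / 3)) := by
  calc |t| * N ^ c * N ^ (-γ) ≤ N ^ (1 / 3 : ℝ) * N ^ (-γ) := by
        gcongr
        exact hadm.abs_mul_rpow_le
    _ = N ^ (-(γ - 1 / 3)) := by rw [← Real.rpow_add hN]; ring_nf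

theorem abs_mul_rpow_mul_div_rpow_le (hadm : IsAdmissible c σ θ N t h a d) (hN : 0 < N)
    {m : ℝ} (hm : 0 < m) :
    |t * m ^ c| * (N / m) ^ (c - γ) ≤ N ^ (-(γ - 1 / 3)) * (h * m ^ γ) := by
  calc |t * m ^ c| * (N / m) ^ (c - γ) = |t| * N ^ c * N ^ (-γ) * m ^ γ := by
        rw [abs_mul, abs_of_pos (Real.rpow_pos_of_pos hm c), Real.div_rpow hN.le hm.le,
          Real.rpow_sub hN, Real.rpow_sub hm, Real.rpow_neg hN.le]
        field_simp
    _ ≤ N ^ (-(γ - 1 / 3)) * (h * m ^ γ) := by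
        gcongr
        · exact hadm.abs_mul_rpow_mul_rpow_le hN
        · exact le_mul_of_one_le_left (by positivity) hadm.one_le_freq

theorem freq_mul_rpow_mul_rpow_le (hadm : IsAdmissible c σ θ N t h a d) (hN : 1 ≤ N)
    (hγ₁ : γ < 1) (hσ : 0 < σ) (hθσ : θ + 8 * σ ≤ 1 / 5) :
    h * N ^ γ * N ^ (15 * σ) ≤ (N ^ (1 - (3 * θ + 6 * σ))) ^ 3 := by
  have hN₀ : 0 < N := by linarith
  calc h * N ^ γ * N ^ (15 * σ) ≤ N ^ σ * N ^ γ * N ^ (15 * σ) := by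
        gcongr
        exact hadm.freq_le
    _ = N ^ (σ + γ + 15 * σ) := by rw [← Real.rpow_add hN₀, ← Real.rpow_add hN₀]
    _ ≤ N ^ ((1 - (3 * θ + 6 * σ)) * (3 : ℕ)) :=
      Real.rpow_le_rpow_of_exponent_le hN (by push_cast; linarith)
    _ = (N ^ (1 - (3 * θ + 6 * σ))) ^ 3 := Real.rpow_mul_natCast hN₀.le _ 3

end IsAdmissible

theorem eventually_norm_sum_weight_mul_le (hγ₀ : 97 / 100 < γ) (hγ₁ : γ < 1) (hγc : γ ≤ c)
    (hσ : 0 < σ) (hθσ : θ + 8 * σ ≤ 1 / 5) (hθ : 0 ≤ θ) :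
    ∀ᶠ N : ℝ in atTop, ∀ (t h : ℝ) (a : ℤ) (d m A B : ℕ), IsAdmissible c σ θ N t h a d →
      0 < m → m ≤ N ^ (2 * θ + 6 * σ) →
      (∀ k ∈ Ioc A B, (m * k : ℝ) ∈ Set.Icc N (4 * N)) →
      ‖∑ k ∈ Ioc A B, weight γ c t h a d (m * k)‖ ≤ N ^ (1 - σ) / d / m := by
  filter_upwards [eventually_norm_sum_e_modEq_le (by linarith) hγ₁ hγc hσ
    (by linarith : 0 < γ - 1 / 3) 1, eventually_ge_atTop 1]
    with N hbound hN₁ t h a d m A B hadm hm hmN hrange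
  have hN₀ : 0 < N := by linarith
  have hm₀ : (0 : ℝ) < m := Nat.cast_pos.2 hm
  have hd₀ : (0 : ℝ) < d := Nat.cast_pos.2 hadm.modulus_pos
  have hfreq : |h * m ^ γ| = h * m ^ γ :=
    abs_of_pos (mul_pos hadm.freq_pos (Real.rpow_pos_of_pos hm₀ γ))
  have hmd : (m : ℝ) * d ≤ N ^ (3 * θ + 6 * σ) :=
    calc (m : ℝ) * d ≤ N ^ (2 * θ + 6 * σ) * N ^ θ := by gcongr; exact hadm.modulus_le
      _ = N ^ (3 * θ + 6 * σ) := by rw [← Real.rpow_add hN₀]; ring_nf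
  simp only [weight_mul]
  refine (norm_sum_ite_dvd_mul_sub_le hadm.gcd_eq_one m _ _ fun r ↦ hbound (h * m ^ γ) (t * m ^ c)
    (N / m) A B d r hadm.modulus_pos ?_ ?_ ?_ ?_ ?_ fun k hk ↦ ?_).trans ?_
  · rw [le_div_iff₀ hm₀, mul_comm]
    exact hmd.trans (Real.rpow_le_self_of_one_le hN₁ (by linarith))
  · exact div_le_self hN₀.le (Nat.one_le_cast.2 hm)
  · rw [hfreq, mul_rpow_mul_div_rpow hN₀ hm₀]
    exact (Real.rpow_le_rpow_of_exponent_le hN₁ (by linarith)).trans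
      (le_mul_of_one_le_left (by positivity) hadm.one_le_freq)
  · rw [hfreq, mul_rpow_mul_div_rpow hN₀ hm₀]
    refine (hadm.freq_mul_rpow_mul_rpow_le hN₁ hγ₁ hσ hθσ).trans ?_
    rw [div_div, Real.rpow_sub hN₀, Real.rpow_one]
    gcongr
  · rw [hfreq, one_mul]
    exact hadm.abs_mul_rpow_mul_div_rpow_le hN₀ hm₀
  · rw [Set.mem_Icc, div_le_iff₀ hm₀, ← mul_div_assoc, le_div_iff₀ hm₀, mul_comm (k : ℝ)]
    exact hrange k hk
  · calc N / m / d * N ^ (-(2 * σ)) = N ^ (1 - 2 * σ) / d / m := by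
          rw [Real.rpow_sub hN₀, Real.rpow_one, Real.rpow_neg hN₀.le]
          ring
      _ ≤ N ^ (1 - σ) / d / m := by
          have := Real.rpow_le_rpow_of_exponent_le hN₁ (by linarith : 1 - 2 * σ ≤ 1 - σ)
          gcongr

end TypeI

section Correlation

theorem exists_abs_rpow_sub_rpow_eq {l u x y : ℝ} (hl : 0 < l) (hx : x ∈ Set.Icc l u)
    (hy : y ∈ Set.Icc l u) (s : ℝ) :
    ∃ ξ ∈ Set.Icc l u, |x ^ s - y ^ s| = |s| * ξ ^ (s - 1) * |x - y| := by
  wlog hxy : x ≤ y generalizing x y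
  · obtain ⟨ξ, hξ, h⟩ := this hy hx (le_of_not_ge hxy)
    exact ⟨ξ, hξ, by rw [abs_sub_comm, h, abs_sub_comm x]⟩
  rcases hxy.eq_or_lt with rfl | hlt
  · exact ⟨x, hx, by simp⟩
  have hderiv (u : ℝ) (hu : x ≤ u) : HasDerivAt (fun v : ℝ ↦ v ^ s) (s * u ^ (s - 1)) u :=
    Real.hasDerivAt_rpow_const (Or.inl (by linarith [hx.1]))
  obtain ⟨ξ, hξ, h⟩ := exists_hasDerivAt_eq_slope _ _ hlt
    (fun u hu ↦ (hderiv u hu.1).continuousAt.continuousWithinAt) fun u hu ↦ hderiv u hu.1.le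
  have hξl : l ≤ ξ := hx.1.trans hξ.1.le
  refine ⟨ξ, ⟨hξl, hξ.2.le.trans hy.2⟩, ?_⟩
  rw [eq_div_iff (by linarith)] at h
  rw [abs_sub_comm, ← h, abs_mul, abs_mul, abs_of_pos (Real.rpow_pos_of_pos (hl.trans_le hξl) _),
    abs_sub_comm x]

theorem mul_rpow_mul_abs_sub_le {l u x y s : ℝ} (hl : 0 < l) (hx : x ∈ Set.Icc l u)
    (hy : y ∈ Set.Icc l u) (hs₀ : 0 ≤ s) (hs₁ : s ≤ 1) :
    s * u ^ (s - 1) * |x - y| ≤ |x ^ s - y ^ s| := by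
  obtain ⟨ξ, hξ, h⟩ := exists_abs_rpow_sub_rpow_eq hl hx hy s
  rw [h, abs_of_nonneg hs₀]
  gcongr ?_ * ?_ * _
  exact Real.rpow_le_rpow_of_nonpos (hl.trans_le hξ.1) hξ.2 (by linarith)

theorem abs_rpow_sub_rpow_le_of_le_one {l u x y s : ℝ} (hl : 0 < l) (hx : x ∈ Set.Icc l u)
    (hy : y ∈ Set.Icc l u) (hs₀ : 0 ≤ s) (hs₁ : s ≤ 1) :
    |x ^ s - y ^ s| ≤ l ^ (s - 1) * |x - y| := by
  obtain ⟨ξ, hξ, h⟩ := exists_abs_rpow_sub_rpow_eq hl hx hy s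
  have hξ₀ : 0 < ξ := hl.trans_le hξ.1
  rw [h, abs_of_nonneg hs₀]
  gcongr ?_ * _
  exact (mul_le_of_le_one_left (by positivity) hs₁).trans
    (Real.rpow_le_rpow_of_nonpos hl hξ.1 (by linarith))

theorem abs_rpow_sub_rpow_le_of_one_le {l u x y s : ℝ} (hl : 0 < l) (hx : x ∈ Set.Icc l u)
    (hy : y ∈ Set.Icc l u) (hs : 1 ≤ s) :
    |x ^ s - y ^ s| ≤ s * u ^ (s - 1) * |x - y| := by
  obtain ⟨ξ, hξ, h⟩ := exists_abs_rpow_sub_rpow_eq hl hx hy s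
  rw [h, abs_of_nonneg (by linarith)]
  gcongr ?_ * ?_ * _
  exact Real.rpow_le_rpow (hl.le.trans hξ.1) hξ.2 (by linarith)

theorem weight_mul_mul_conj_weight_mul {a : ℤ} {d l₁ l₂ : ℕ} (hmod : l₁ ≡ l₂ [MOD d])
    (γ c t h : ℝ) (m : ℕ) :
    weight γ c t h a d (l₁ * m) * conj (weight γ c t h a d (l₂ * m)) =
      if (d : ℤ) ∣ (l₁ * m : ℕ) - a then
        e (t * (l₁ ^ c - l₂ ^ c) * m ^ c - h * (l₁ ^ γ - l₂ ^ γ) * m ^ γ) else 0 := by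
  simp only [weight_mul, ← dvd_sub_iff_of_modEq (a := a) (hmod.mul_right m)]
  split_ifs
  · rw [e_mul_conj_e]
    ring_nf
  · rw [zero_mul]

theorem weight_mul_mul_conj_weight_mul_of_not_modEq {a : ℤ} {d l₁ l₂ : ℕ}
    (hda : Int.gcd d a = 1) (hmod : ¬ l₁ ≡ l₂ [MOD d]) (γ c t h : ℝ) (m : ℕ) :
    weight γ c t h a d (l₁ * m) * conj (weight γ c t h a d (l₂ * m)) = 0 := by
  rw [weight_mul, weight_mul]
  split_ifs with h₁ h₂
  · rw [mul_comm] at h₁ h₂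
    exact absurd ((dvd_mul_sub_iff_modEq hda h₂ l₁).1 h₁) hmod
  all_goals simp

variable {γ c σ θ : ℝ}

theorem two_mul_le_three_mul_rpow {N l : ℝ} (hN : 0 < N) (hl : l ^ 2 ≤ 2 * N) :
    2 * l ≤ 3 * N ^ (1 / 2 : ℝ) := by
  rw [← Real.sqrt_eq_rpow]
  exact le_of_sq_le_sq (by rw [mul_pow, mul_pow, Real.sq_sqrt hN.le]; linarith) (by positivity)

theorem rpow_div_three_le_div_div {N l d : ℝ} (hN : 0 < N) (hl₀ : 0 < l) (hl : l ^ 2 ≤ 2 * N)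
    (hd₀ : 0 < d) (hd : d ≤ N ^ θ) : N ^ (1 / 2 - θ) / 3 ≤ N / (2 * l) / d := by
  have hprod : 2 * l * d ≤ 3 * N ^ (1 / 2 : ℝ) * N ^ θ :=
    mul_le_mul (two_mul_le_three_mul_rpow hN hl) hd hd₀.le (by positivity)
  calc N ^ (1 / 2 - θ) / 3 = N / (3 * N ^ (1 / 2 : ℝ) * N ^ θ) := by
        have hsplit : N = N ^ (1 / 2 : ℝ) * N ^ (1 / 2 : ℝ) := by
          rw [← Real.rpow_add hN]; norm_num
        rw [Real.rpow_sub hN]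
        nth_rewrite 3 [hsplit]
        field_simp
    _ ≤ N / (2 * l * d) := by gcongr
    _ = N / (2 * l) / d := (div_div _ _ _).symm

theorem four_mul_rpow_mul_sq_le_sq {N l d : ℝ} (hN : 0 < N) (hl₀ : 0 < l) (hl : l ^ 2 ≤ 2 * N)
    (hd₀ : 0 < d) (hd : d ≤ N ^ θ) (hN36 : 36 ≤ N ^ (1 - 4 * θ - 18 * σ)) :
    4 * N ^ (18 * σ) * d ^ 2 ≤ (N / (2 * l) / d) ^ 2 :=
  calc 4 * N ^ (18 * σ) * d ^ 2 ≤ 36 / 9 * N ^ (18 * σ) * (N ^ θ) ^ 2 := by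
        gcongr
        norm_num
    _ ≤ N ^ (1 - 4 * θ - 18 * σ) / 9 * N ^ (18 * σ) * (N ^ θ) ^ 2 := by gcongr
    _ = (N ^ (1 / 2 - θ) / 3) ^ 2 := by
        rw [div_pow, ← Real.rpow_mul_natCast hN.le, ← Real.rpow_mul_natCast hN.le,
          div_mul_eq_mul_div, div_mul_eq_mul_div, ← Real.rpow_add hN, ← Real.rpow_add hN]
        norm_num
        ring_nf
    _ ≤ (N / (2 * l) / d) ^ 2 :=
        pow_le_pow_left₀ (by positivity) (rpow_div_three_le_div_div hN hl₀ hl hd₀ hd) 2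

namespace IsAdmissible

variable {N t h l x y : ℝ} {a : ℤ} {d : ℕ}

theorem rpow_le_abs_sub_mul_rpow (hadm : IsAdmissible c σ θ N t h a d) (hN : 0 < N)
    (hγ₀ : 0 < γ) (hγ₁ : γ ≤ 1) (hl₀ : 0 < l) (hl : l ^ 2 ≤ 2 * N)
    (hNγ : 3 / γ ≤ N ^ (γ - 1 / 2 - 15 * σ)) (hx : x ∈ Set.Icc l (2 * l))
    (hy : y ∈ Set.Icc l (2 * l)) (hxy : 1 ≤ |x - y|) :
    N ^ (15 * σ) ≤ |h * (x ^ γ - y ^ γ)| * (N / (2 * l)) ^ γ := by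
  have hh₀ := hadm.freq_pos
  have hdiff := mul_rpow_mul_abs_sub_le hl₀ hx hy hγ₀.le hγ₁
  rw [div_le_iff₀ hγ₀] at hNγ
  calc N ^ (15 * σ) = 3 * N ^ (15 * σ) / 3 := by ring
    _ ≤ N ^ (γ - 1 / 2 - 15 * σ) * γ * N ^ (15 * σ) / 3 := by gcongr
    _ = γ * N ^ γ / (3 * N ^ (1 / 2 : ℝ)) := by
        rw [Real.rpow_sub hN, Real.rpow_sub hN]
        field_simp
    _ ≤ γ * N ^ γ / (2 * l) :=
      div_le_div_of_nonneg_left (by positivity) (by positivity) (two_mul_le_three_mul_rpow hN hl)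
    _ = 1 * (γ * (2 * l) ^ (γ - 1) * 1) * (N / (2 * l)) ^ γ := by
        rw [Real.div_rpow hN.le (by positivity), Real.rpow_sub_one (by positivity)]
        field_simp
    _ ≤ h * (γ * (2 * l) ^ (γ - 1) * |x - y|) * (N / (2 * l)) ^ γ := by
        gcongr
        exact hadm.one_le_freq
    _ ≤ |h * (x ^ γ - y ^ γ)| * (N / (2 * l)) ^ γ := by
        rw [abs_mul, abs_of_pos hh₀]
        gcongr

theorem abs_sub_mul_rpow_mul_rpow_le (hadm : IsAdmissible c σ θ N t h a d) (hN : 1 ≤ N)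
    (hγ₀ : 0 ≤ γ) (hγ₁ : γ ≤ 1) (hl₀ : 0 < l) (hl : l ^ 2 ≤ 2 * N)
    (hN36 : 36 ≤ N ^ (1 - 4 * θ - 18 * σ)) (hx : x ∈ Set.Icc l (2 * l))
    (hy : y ∈ Set.Icc l (2 * l)) (hxy : |x - y| ≤ 2 * d * N ^ (2 * σ)) :
    |h * (x ^ γ - y ^ γ)| * (N / (2 * l)) ^ γ * N ^ (15 * σ) ≤ (N / (2 * l) / d) ^ 3 := by
  have hN₀ : 0 < N := by linarith
  have hd₀ : (0 : ℝ) < d := Nat.cast_pos.2 hadm.modulus_pos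
  set P := N / (2 * l) / d with hP
  have hP_sq : 4 * N ^ (18 * σ) * (d : ℝ) ^ 2 ≤ P ^ 2 :=
    four_mul_rpow_mul_sq_le_sq hN₀ hl₀ hl hd₀ hadm.modulus_le hN36
  have hNl : (N / (2 * l)) ^ γ * l ^ (γ - 1) ≤ 2 * d * P := by
    calc (N / (2 * l)) ^ γ * l ^ (γ - 1) = (N / 2) ^ γ / l := by
          rw [div_mul_eq_div_div, Real.div_rpow (by positivity) hl₀.le, Real.rpow_sub_one hl₀.ne']
          field_simp
      _ ≤ N / l := by
          gcongr
          calc (N / 2) ^ γ ≤ N ^ γ := Real.rpow_le_rpow (by positivity) (by linarith) hγ₀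
            _ ≤ N := Real.rpow_le_self_of_one_le hN hγ₁
      _ = 2 * d * P := by rw [hP]; field_simp
  calc |h * (x ^ γ - y ^ γ)| * (N / (2 * l)) ^ γ * N ^ (15 * σ)
      ≤ N ^ σ * (l ^ (γ - 1) * (2 * d * N ^ (2 * σ))) * (N / (2 * l)) ^ γ * N ^ (15 * σ) := by
        rw [abs_mul, abs_of_pos hadm.freq_pos]
        gcongr
        · exact hadm.freq_le
        · exact (abs_rpow_sub_rpow_le_of_le_one hl₀ hx hy hγ₀ hγ₁).trans (by gcongr)
    _ = (N / (2 * l)) ^ γ * l ^ (γ - 1) * (2 * d * N ^ (18 * σ)) := by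
        rw [show 18 * σ = σ + 2 * σ + 15 * σ by ring, Real.rpow_add hN₀, Real.rpow_add hN₀]
        ring
    _ ≤ 2 * d * P * (2 * d * N ^ (18 * σ)) := by gcongr
    _ = 4 * N ^ (18 * σ) * (d : ℝ) ^ 2 * P := by ring
    _ ≤ P ^ 2 * P := by gcongr
    _ = P ^ 3 := by ring

theorem abs_sub_mul_rpow_le (hadm : IsAdmissible c σ θ N t h a d) (hN : 0 < N)
    (hγ₀ : 0 < γ) (hγ₁ : γ ≤ 1) (hc : 1 ≤ c) (hl₀ : 0 < l) (hx : x ∈ Set.Icc l (2 * l))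
    (hy : y ∈ Set.Icc l (2 * l)) :
    |t * (x ^ c - y ^ c)| * (N / (2 * l)) ^ (c - γ) ≤
      c / γ * N ^ (-(γ - 1 / 3)) * |h * (x ^ γ - y ^ γ)| := by
  have h2l : 0 < 2 * l := by positivity
  calc |t * (x ^ c - y ^ c)| * (N / (2 * l)) ^ (c - γ)
      ≤ |t| * (c * (2 * l) ^ (c - 1) * |x - y|) * (N / (2 * l)) ^ (c - γ) := by
        rw [abs_mul]
        gcongr
        exact abs_rpow_sub_rpow_le_of_one_le hl₀ hx hy hc
    _ = c / (2 * l) * |x - y| * (|t * (2 * l) ^ c| * (N / (2 * l)) ^ (c - γ)) := by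
        rw [abs_mul, abs_of_pos (Real.rpow_pos_of_pos h2l c), Real.rpow_sub_one h2l.ne']
        ring
    _ ≤ c / (2 * l) * |x - y| * (N ^ (-(γ - 1 / 3)) * (h * (2 * l) ^ γ)) := by
        gcongr _ * ?_
        exact hadm.abs_mul_rpow_mul_div_rpow_le hN h2l
    _ = c / γ * N ^ (-(γ - 1 / 3)) * (h * (γ * (2 * l) ^ (γ - 1) * |x - y|)) := by
        rw [Real.rpow_sub_one h2l.ne']
        field_simp
    _ ≤ c / γ * N ^ (-(γ - 1 / 3)) * |h * (x ^ γ - y ^ γ)| := by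
        rw [abs_mul, abs_of_pos hadm.freq_pos]
        have := hadm.freq_pos
        gcongr
        exact mul_rpow_mul_abs_sub_le hl₀ hx hy hγ₀.le hγ₁

end IsAdmissible

theorem eventually_norm_sum_weight_mul_conj_le (hγ₀ : 97 / 100 < γ) (hγ₁ : γ < 1) (hc : 1 ≤ c)
    (hσ : 0 < σ) (hθσ : θ + 8 * σ ≤ 1 / 5) (hθ : 0 ≤ θ) :
    ∀ᶠ N : ℝ in atTop, ∀ (t h : ℝ) (a : ℤ) (d l l₁ l₂ A B : ℕ), IsAdmissible c σ θ N t h a d →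
      0 < l → (l : ℝ) ^ 2 ≤ 2 * N → l₁ ∈ Set.Icc l (2 * l) → l₂ ∈ Set.Icc l (2 * l) → l₁ ≠ l₂ →
      l₁ ≡ l₂ [MOD d] → |(l₁ : ℝ) - l₂| ≤ 2 * d * N ^ (2 * σ) →
      (∀ m ∈ Ioc A B, (l₁ * m : ℝ) ∈ Set.Icc N (2 * N)) →
      ‖∑ m ∈ Ioc A B, weight γ c t h a d (l₁ * m) * conj (weight γ c t h a d (l₂ * m))‖ ≤
        N / (2 * l) / d * N ^ (-(2 * σ)) := by
  filter_upwards [eventually_norm_sum_e_modEq_le (by linarith) hγ₁ (hγ₁.le.trans hc) hσ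
    (by linarith : 0 < γ - 1 / 3) (c / γ),
    (tendsto_rpow_atTop (by linarith : 0 < γ - 1 / 2 - 15 * σ)).eventually_ge_atTop (3 / γ),
    (tendsto_rpow_atTop (by linarith : 0 < 1 - 4 * θ - 18 * σ)).eventually_ge_atTop 36,
    (tendsto_rpow_atTop (by linarith : 0 < 1 / 2 - θ)).eventually_ge_atTop 3, eventually_ge_atTop 1]
    with N hbound hNγ hN36 hNθ hN₁
    t h a d l l₁ l₂ A B hadm hl hlN hl₁ hl₂ hne hmod hdiff hrange
  have hN₀ : 0 < N := by linarith
  have hl₀ : (1 : ℝ) ≤ l := Nat.one_le_cast.2 hl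
  have hl₁' : (l₁ : ℝ) ∈ Set.Icc (l : ℝ) (2 * l) :=
    ⟨by exact_mod_cast hl₁.1, by exact_mod_cast hl₁.2⟩
  have hl₂' : (l₂ : ℝ) ∈ Set.Icc (l : ℝ) (2 * l) :=
    ⟨by exact_mod_cast hl₂.1, by exact_mod_cast hl₂.2⟩
  have hdiff₁ : 1 ≤ |(l₁ : ℝ) - l₂| := by
    exact_mod_cast Int.one_le_abs (sub_ne_zero.2 (Nat.cast_injective.ne hne) : (l₁ : ℤ) - l₂ ≠ 0)
  simp only [weight_mul_mul_conj_weight_mul hmod]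
  refine norm_sum_ite_dvd_mul_sub_le hadm.gcd_eq_one l₁ _ _ fun r ↦
    hbound (h * (l₁ ^ γ - l₂ ^ γ)) (t * (l₁ ^ c - l₂ ^ c)) (N / (2 * l)) A B d r hadm.modulus_pos ?_
      (div_le_self hN₀.le (by linarith))
      (hadm.rpow_le_abs_sub_mul_rpow hN₀ (by linarith) hγ₁.le (by linarith) hlN hNγ hl₁' hl₂'
        hdiff₁)
      (hadm.abs_sub_mul_rpow_mul_rpow_le hN₁ (by linarith) hγ₁.le (by linarith) hlN hN36 hl₁' hl₂'
        hdiff)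
      (hadm.abs_sub_mul_rpow_le hN₀ (by linarith) hγ₁.le hc (by linarith) hl₁' hl₂') fun m hm ↦ ?_
  · have hd₀ : (0 : ℝ) < d := Nat.cast_pos.2 hadm.modulus_pos
    rw [← one_le_div hd₀]
    linarith [rpow_div_three_le_div_div hN₀ (by linarith) hlN hd₀ hadm.modulus_le]
  · have hm' := hrange m hm
    have hlower := mul_le_mul_of_nonneg_right hl₁'.2 (m.cast_nonneg (α := ℝ))
    have hupper := mul_le_mul_of_nonneg_right hl₁'.1 (m.cast_nonneg (α := ℝ))
    rw [Set.mem_Icc, div_le_iff₀ (by positivity), ← mul_div_assoc, le_div_iff₀ (by positivity)]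
    exact ⟨by linarith [hm'.1], by linarith [hm'.2]⟩

end Correlation

section TypeII

theorem norm_sum_mul_sum_sq_le {ι κ : Type*} [DecidableEq κ] {s : Finset ι} {t : ι → Finset κ}
    {T : Finset κ} (ht : ∀ i ∈ s, t i ⊆ T) {x : ι → ℂ} {y : κ → ℂ} {X Y : ℝ}
    (hx : ∀ i ∈ s, ‖x i‖ ≤ X) (hy : ∀ k ∈ T, ‖y k‖ ≤ Y) {z : ι → κ → ℂ} {R : ℝ}
    (hR : ∀ i ∈ s, ∑ j ∈ s, ‖∑ k ∈ t i ∩ t j, z i k * conj (z j k)‖ ≤ R) :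
    ‖∑ i ∈ s, ∑ k ∈ t i, x i * y k * z i k‖ ^ 2 ≤ #T * Y ^ 2 * (X ^ 2 * (#s * R)) := by
  set u : ι → κ → ℂ := fun i k ↦ if k ∈ t i then x i * z i k else 0
  have hswap : ∑ i ∈ s, ∑ k ∈ t i, x i * y k * z i k = ∑ k ∈ T, y k * ∑ i ∈ s, u i k := by
    simp only [mul_sum]
    rw [sum_comm]
    refine sum_congr rfl fun i hi ↦ ?_
    simp only [u, mul_ite, mul_zero, sum_ite_mem, inter_eq_right.2 (ht i hi)]
    exact sum_congr rfl fun k _ ↦ by ring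
  have hcorr : ∀ i ∈ s, ∀ j ∈ s, ‖∑ k ∈ T, u i k * conj (u j k)‖ ≤
      X ^ 2 * ‖∑ k ∈ t i ∩ t j, z i k * conj (z j k)‖ := fun i hi j hj ↦ by
    have hprod : ∀ k, u i k * conj (u j k) =
        if k ∈ t i ∩ t j then x i * conj (x j) * (z i k * conj (z j k)) else 0 := fun k ↦ by
      by_cases h₁ : k ∈ t i <;> by_cases h₂ : k ∈ t j <;> simp [u, h₁, h₂, mul_mul_mul_comm]
    simp only [hprod, sum_ite_mem, inter_eq_right.2 (inter_subset_left.trans (ht i hi)), ← mul_sum]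
    rw [norm_mul, norm_mul, RCLike.norm_conj, sq]
    gcongr
    exacts [(norm_nonneg _).trans (hx i hi), hx i hi, hx j hj]
  calc ‖∑ i ∈ s, ∑ k ∈ t i, x i * y k * z i k‖ ^ 2 ≤ (∑ k ∈ T, ‖y k‖ * ‖∑ i ∈ s, u i k‖) ^ 2 := by
        rw [hswap]
        gcongr
        exact (norm_sum_le _ _).trans_eq (sum_congr rfl fun k _ ↦ norm_mul _ _)
    _ ≤ (∑ k ∈ T, ‖y k‖ ^ 2) * ∑ k ∈ T, ‖∑ i ∈ s, u i k‖ ^ 2 := sum_mul_sq_le_sq_mul_sq _ _ _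
    _ ≤ #T * Y ^ 2 * (X ^ 2 * (#s * R)) := by
        gcongr
        · rw [← nsmul_eq_mul]
          exact sum_le_card_nsmul _ _ _ fun k hk ↦ by gcongr; exact hy k hk
        · rw [← nsmul_eq_mul, ← sum_const, mul_sum]
          refine (sum_norm_sum_sq_le T s u).trans (sum_le_sum fun i hi ↦ ?_)
          exact (sum_le_sum fun j hj ↦ hcorr i hi j hj).trans
            (by rw [← mul_sum]; gcongr; exact hR i hi)

theorem mul_mem_Icc_of_mem_Ioc_div {N U : ℝ} {n₀ n₁ l m : ℕ} (hn₀ : N ≤ n₀ + 1) (hn₁ : n₁ ≤ U)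
    (hl : 0 < l) (hm : m ∈ Ioc (n₀ / l) (n₁ / l)) : (l * m : ℝ) ∈ Set.Icc N U := by
  rw [mem_Ioc, Nat.div_lt_iff_lt_mul hl, Nat.le_div_iff_mul_le hl, mul_comm m l] at hm
  exact ⟨hn₀.trans (by exact_mod_cast hm.1), hn₁.trans' (by exact_mod_cast hm.2)⟩

theorem cast_div_le_div {x : ℝ} {n l L : ℕ} (hL : 0 < L) (hLl : L ≤ l) (hn : n ≤ x) :
    ((n / l : ℕ) : ℝ) ≤ x / L :=
  Nat.cast_div_le.trans
    (div_le_div₀ (n.cast_nonneg.trans hn) hn (Nat.cast_pos.2 hL) (Nat.cast_le.2 hLl))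

theorem abs_natCast_sub_natCast_le_of_mem_Ico {L D k l : ℕ} (hk : k ∈ Ico L (L + D))
    (hl : l ∈ Ico L (L + D)) : |(k : ℝ) - l| ≤ D := by
  rw [mem_Ico] at hk hl
  exact_mod_cast abs_le.2 (by lia : -(D : ℤ) ≤ (k : ℤ) - l ∧ (k : ℤ) - l ≤ D)

theorem card_filter_modEq_le_of_subset_Ico {s : Finset ℕ} {L d Q : ℕ} (hd : 0 < d)
    (hs : s ⊆ Ico L (L + d * Q)) (r : ℕ) : #{k ∈ s | k ≡ r [MOD d]} ≤ Q := by
  have hceil : (((L + d * Q : ℕ) : ℚ) - r) / d = (L - r) / d + (Q : ℤ) := by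
    have : (d : ℚ) ≠ 0 := Nat.cast_ne_zero.2 hd.ne'
    push_cast
    field_simp
    ring
  have hcard := Nat.Ico_filter_modEq_card L (L + d * Q) hd r
  rw [hceil, Int.ceil_add_intCast] at hcard
  have := card_le_card (filter_subset_filter (· ≡ r [MOD d]) hs)
  lia

theorem sum_le_add_mul_of_modEq {s : Finset ℕ} {L d Q l : ℕ} (hd : 0 < d)
    (hs : s ⊆ Ico L (L + d * Q)) {b : ℕ → ℝ} {B₀ B₁ : ℝ} (hB₀ : 0 ≤ B₀) (hB₁ : 0 ≤ B₁)
    (hself : b l ≤ B₀) (hne : ∀ k ∈ s, k ≠ l → k ≡ l [MOD d] → b k ≤ B₁)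
    (hnot : ∀ k, ¬ k ≡ l [MOD d] → b k = 0) : ∑ k ∈ s, b k ≤ B₀ + Q * B₁ := by
  have hb : ∀ k ∈ s, b k ≤ (if k = l then B₀ else 0) + if k ≡ l [MOD d] then B₁ else 0 := by
    intro k hk
    by_cases hkl : k = l
    · simpa [hkl, Nat.ModEq.refl l] using by linarith
    · by_cases hmod : k ≡ l [MOD d]
      · simpa [hkl, hmod] using hne k hk hkl hmod
      · simp [hkl, hmod, hnot k hmod]
  have hdiag : ∑ k ∈ s, (if k = l then B₀ else 0) ≤ B₀ := by
    rw [sum_ite_eq']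
    split_ifs <;> simp [hB₀]
  calc ∑ k ∈ s, b k ≤ ∑ k ∈ s, ((if k = l then B₀ else 0) + if k ≡ l [MOD d] then B₁ else 0) :=
        sum_le_sum hb
    _ ≤ B₀ + Q * B₁ := by
        rw [sum_add_distrib, ← sum_filter (· ≡ l [MOD d]), sum_const, nsmul_eq_mul]
        gcongr
        exact card_filter_modEq_le_of_subset_Ico hd hs l

variable {γ c σ θ : ℝ}

namespace IsAdmissible

variable {N t h : ℝ} {a : ℤ} {d : ℕ}

theorem norm_sum_weight_mul_conj_self_le (hadm : IsAdmissible c σ θ N t h a d) {n₀ n₁ l L : ℕ}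
    (hL : 0 < L) (hLl : L ≤ l) (hn₁ : n₁ ≤ 2 * N) (hNL : 1 ≤ N / L / d) :
    ‖∑ m ∈ Ioc (n₀ / l) (n₁ / l),
      weight γ c t h a d (l * m) * conj (weight γ c t h a d (l * m))‖ ≤ 3 * (N / L / d) := by
  have hsupp : ∀ m, weight γ c t h a d (l * m) * conj (weight γ c t h a d (l * m)) =
      if (d : ℤ) ∣ (l * m : ℕ) - a then (1 : ℂ) else 0 := fun m ↦ by
    rw [weight_mul]
    split_ifs
    · rw [e_mul_conj_e, sub_self, e, Complex.ofReal_zero, mul_zero, Complex.exp_zero]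
    · rw [zero_mul]
  simp only [hsupp]
  refine norm_sum_ite_dvd_mul_sub_le hadm.gcd_eq_one l _ _ fun r ↦ ?_
  calc ‖∑ k ∈ Ioc (n₀ / l) (n₁ / l) with k ≡ r [MOD d], (1 : ℂ)‖
      = #{k ∈ Ioc (n₀ / l) (n₁ / l) | k ≡ r [MOD d]} := by simp
    _ ≤ #{k ∈ Ioc 0 (n₁ / l) | k ≡ r [MOD d]} := by
        gcongr
        exact Nat.zero_le _
    _ ≤ ((n₁ / l : ℕ) - (0 : ℕ) : ℝ) / d + 1 :=
      card_filter_modEq_le (Nat.zero_le _) hadm.modulus_pos r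
    _ ≤ 2 * N / L / d + N / L / d := by
        gcongr
        rw [Nat.cast_zero, sub_zero]
        exact cast_div_le_div hL hLl hn₁
    _ = 3 * (N / L / d) := by ring

end IsAdmissible

theorem eventually_sum_norm_sum_weight_mul_conj_le (hγ₀ : 97 / 100 < γ) (hγ₁ : γ < 1) (hc : 1 ≤ c)
    (hσ : 0 < σ) (hθσ : θ + 8 * σ ≤ 1 / 5) (hθ : 0 ≤ θ) :
    ∀ᶠ N : ℝ in atTop, ∀ (t h : ℝ) (a : ℤ) (d n₀ n₁ L Q l : ℕ) (s : Finset ℕ),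
      IsAdmissible c σ θ N t h a d → N ≤ n₀ + 1 → n₁ ≤ 2 * N → 0 < L → (L : ℝ) ^ 2 ≤ 2 * N →
      d * Q ≤ L → Q ≤ 2 * N ^ (2 * σ) → s ⊆ Ico L (L + d * Q) → l ∈ s →
      ∑ k ∈ s, ‖∑ m ∈ Ioc (n₀ / l) (n₁ / l) ∩ Ioc (n₀ / k) (n₁ / k),
        weight γ c t h a d (l * m) * conj (weight γ c t h a d (k * m))‖ ≤ 4 * (N / L / d) := by
  filter_upwards [eventually_norm_sum_weight_mul_conj_le hγ₀ hγ₁ hc hσ hθσ hθ,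
    (tendsto_rpow_atTop (by linarith : 0 < 1 / 2 - θ)).eventually_ge_atTop 3, eventually_ge_atTop 1]
    with N hcorr hNθ hN₁ t h a d n₀ n₁ L Q l s hadm hn₀ hn₁ hL hLN hdQ hQ hs hl
  have hN₀ : 0 < N := by linarith
  have hL₀ : (0 : ℝ) < L := Nat.cast_pos.2 hL
  have hd₀ : (0 : ℝ) < d := Nat.cast_pos.2 hadm.modulus_pos
  have hhalf : N / (2 * L) / d = N / L / d / 2 := by ring
  have hNL : 1 ≤ N / L / d := by
    linarith [rpow_div_three_le_div_div hN₀ hL₀ hLN hd₀ hadm.modulus_le]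
  have hmem : ∀ k ∈ s, L ≤ k ∧ k < L + d * Q := fun k hk ↦ mem_Ico.1 (hs hk)
  have hmem_Icc : ∀ k ∈ s, k ∈ Set.Icc L (2 * L) := fun k hk ↦
    ⟨(hmem k hk).1, by linarith [(hmem k hk).2]⟩
  have hoff : ∀ k ∈ s, k ≠ l → k ≡ l [MOD d] →
      ‖∑ m ∈ Ioc (n₀ / l) (n₁ / l) ∩ Ioc (n₀ / k) (n₁ / k),
        weight γ c t h a d (l * m) * conj (weight γ c t h a d (k * m))‖ ≤
        N / (2 * L) / d * N ^ (-(2 * σ)) := by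
    intro k hk hkl hmod
    rw [Ioc_inter_Ioc]
    refine hcorr t h a d L l k _ _ hadm hL hLN (hmem_Icc l hl) (hmem_Icc k hk) hkl.symm hmod.symm
      ((abs_natCast_sub_natCast_le_of_mem_Ico (hs hl) (hs hk)).trans ?_)
      fun m hm ↦ mul_mem_Icc_of_mem_Ioc_div hn₀ hn₁ (hL.trans_le (hmem l hl).1)
        (Ioc_subset_Ioc (le_max_left _ _) (min_le_left _ _) hm)
    calc ((d * Q : ℕ) : ℝ) ≤ d * (2 * N ^ (2 * σ)) := by rw [Nat.cast_mul]; gcongr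
      _ = 2 * d * N ^ (2 * σ) := by ring
  calc _ ≤ 3 * (N / L / d) + Q * (N / (2 * L) / d * N ^ (-(2 * σ))) := by
        refine sum_le_add_mul_of_modEq hadm.modulus_pos hs (by positivity) (by positivity) ?_ hoff
          fun k hk ↦ ?_
        · rw [inter_self]
          exact hadm.norm_sum_weight_mul_conj_self_le hL (hmem l hl).1 hn₁ hNL
        · simp only [weight_mul_mul_conj_weight_mul_of_not_modEq hadm.gcd_eq_one
            (mt Nat.ModEq.symm hk), sum_const_zero, norm_zero]
    _ ≤ 3 * (N / L / d) + 2 * N ^ (2 * σ) * (N / (2 * L) / d * N ^ (-(2 * σ))) := by gcongr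
    _ = 4 * (N / L / d) := by
        rw [Real.rpow_neg hN₀.le]
        field_simp
        ring

theorem eventually_norm_sum_block_weight_le (hγ₀ : 97 / 100 < γ) (hγ₁ : γ < 1) (hc : 1 ≤ c)
    (hσ : 0 < σ) (hθσ : θ + 8 * σ ≤ 1 / 5) (hθ : 0 ≤ θ) :
    ∀ᶠ N : ℝ in atTop, ∀ (t h : ℝ) (a : ℤ) (d n₀ n₁ k Q : ℕ) (s : Finset ℕ) (x y : ℕ → ℂ)
      (X Y : ℝ), IsAdmissible c σ θ N t h a d → N ≤ n₀ + 1 → n₁ ≤ 2 * N → 0 < k →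
      (Q : ℝ) ∈ Set.Icc (N ^ (2 * σ)) (2 * N ^ (2 * σ)) →
      s ⊆ Ico (k * (d * Q)) (k * (d * Q) + d * Q) → (∀ l ∈ s, (l : ℝ) ^ 2 ≤ 2 * N) →
      (∀ l, ‖x l‖ ≤ X) → (∀ m, ‖y m‖ ≤ Y) →
      ‖∑ l ∈ s, ∑ m ∈ Ioc (n₀ / l) (n₁ / l), x l * y m * weight γ c t h a d (l * m)‖ ≤
        3 * X * Y * N ^ (1 - σ) / d * (1 / k) := by
  filter_upwards [eventually_sum_norm_sum_weight_mul_conj_le hγ₀ hγ₁ hc hσ hθσ hθ,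
    eventually_ge_atTop 1]
    with N hcorr hN₁ t h a d n₀ n₁ k Q s x y X Y hadm hn₀ hn₁ hk hQ hs hsN hx hy
  have hN₀ : 0 < N := by linarith
  have hX : 0 ≤ X := (norm_nonneg _).trans (hx 0)
  have hY : 0 ≤ Y := (norm_nonneg _).trans (hy 0)
  have : (0 : ℝ) < k := Nat.cast_pos.2 hk
  have hd₀ : (0 : ℝ) < d := Nat.cast_pos.2 hadm.modulus_pos
  have hQ₀ : (0 : ℝ) < Q := (by positivity : 0 < N ^ (2 * σ)).trans_le hQ.1
  obtain rfl | ⟨l', hl'⟩ := s.eq_empty_or_nonempty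
  · rw [sum_empty, norm_zero]
    positivity
  set L := k * (d * Q) with hL_def
  have hL : 0 < L := Nat.mul_pos hk (Nat.mul_pos hadm.modulus_pos (Nat.cast_pos.1 hQ₀))
  have hLN : (L : ℝ) ^ 2 ≤ 2 * N := by
    have : (L : ℝ) ≤ l' := Nat.cast_le.2 (mem_Ico.1 (hs hl')).1
    exact (by gcongr : (L : ℝ) ^ 2 ≤ l' ^ 2).trans (hsN l' hl')
  have hcard : (#s : ℝ) ≤ d * Q := by
    simpa using (Nat.cast_le (α := ℝ)).2 (card_le_card hs)
  refine le_of_sq_le_sq ?_ (by positivity)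
  calc _ ≤ #(Ioc 0 (n₁ / L)) * Y ^ 2 * (X ^ 2 * (#s * (4 * (N / L / d)))) :=
        norm_sum_mul_sum_sq_le (fun l hl ↦ Ioc_subset_Ioc (Nat.zero_le _)
          (Nat.div_le_div_left (mem_Ico.1 (hs hl)).1 hL)) (fun l _ ↦ hx l) (fun m _ ↦ hy m)
          fun l ↦ hcorr t h a d n₀ n₁ L Q l s hadm hn₀ hn₁ hL hLN (Nat.le_mul_of_pos_left _ hk)
            hQ.2 hs
    _ ≤ 2 * N / L * Y ^ 2 * (X ^ 2 * (d * Q * (4 * (N / L / d)))) := by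
        rw [Nat.card_Ioc, Nat.sub_zero]
        gcongr
        exact cast_div_le_div hL le_rfl hn₁
    _ = 8 * (X * Y * N) ^ 2 / (d * k) ^ 2 / Q := by
        rw [hL_def]
        push_cast
        field_simp
        ring
    _ ≤ 9 * (X * Y * N) ^ 2 / (d * k) ^ 2 / N ^ (2 * σ) := by
        gcongr
        · norm_num
        · exact hQ.1
    _ = (3 * X * Y * N ^ (1 - σ) / d * (1 / k)) ^ 2 := by
        rw [Real.rpow_sub hN₀, Real.rpow_one, mul_comm 2 σ, Real.rpow_mul hN₀.le, Real.rpow_two]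
        field_simp
        ring

theorem eventually_norm_sum_sum_mul_weight_le (hγ₀ : 97 / 100 < γ) (hγ₁ : γ < 1) (hc : 1 ≤ c)
    (hσ : 0 < σ) (hθσ : θ + 8 * σ ≤ 1 / 5) (hθ : 0 ≤ θ) :
    ∀ᶠ N : ℝ in atTop, ∀ (t h : ℝ) (a : ℤ) (d n₀ n₁ V W : ℕ) (x y : ℕ → ℂ) (X Y : ℝ),
      IsAdmissible c σ θ N t h a d → N ≤ n₀ + 1 → n₁ ≤ 2 * N →
      2 * N ^ (θ + 2 * σ) ≤ V + 1 → (W : ℝ) ^ 2 ≤ 2 * N → (∀ l, ‖x l‖ ≤ X) → (∀ m, ‖y m‖ ≤ Y) →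
      ‖∑ l ∈ Ioc V W, ∑ m ∈ Ioc (n₀ / l) (n₁ / l), x l * y m * weight γ c t h a d (l * m)‖ ≤
        3 * X * Y * N ^ (1 - σ) / d * (1 + Real.log N) := by
  filter_upwards [eventually_norm_sum_block_weight_le hγ₀ hγ₁ hc hσ hθσ hθ, eventually_ge_atTop 2]
    with N hblock hN₂ t h a d n₀ n₁ V W x y X Y hadm hn₀ hn₁ hV hW hx hy
  have hN₀ : 0 < N := by linarith
  have hX : 0 ≤ X := (norm_nonneg _).trans (hx 0)
  have hY : 0 ≤ Y := (norm_nonneg _).trans (hy 0)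
  have hWN : (W : ℝ) ≤ N := le_of_sq_le_sq (by nlinarith) hN₀.le
  have hone : 1 ≤ N ^ (2 * σ) := Real.one_le_rpow (by linarith) (by linarith)
  set Q := ⌈N ^ (2 * σ)⌉₊
  have hQ : (Q : ℝ) ∈ Set.Icc (N ^ (2 * σ)) (2 * N ^ (2 * σ)) :=
    ⟨Nat.le_ceil _, by linarith [Nat.ceil_lt_add_one (by positivity : 0 ≤ N ^ (2 * σ))]⟩
  have hdQ : d * Q ≤ V + 1 := by
    have : (d : ℝ) * Q ≤ V + 1 :=
      calc (d : ℝ) * Q ≤ N ^ θ * (2 * N ^ (2 * σ)) :=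
            mul_le_mul hadm.modulus_le hQ.2 Q.cast_nonneg (by positivity)
        _ = 2 * N ^ (θ + 2 * σ) := by rw [Real.rpow_add hN₀]; ring
        _ ≤ V + 1 := hV
    exact_mod_cast this
  have hdQ₀ : 0 < d * Q := Nat.mul_pos hadm.modulus_pos (Nat.ceil_pos.2 (by linarith))
  rw [← sum_fiberwise_of_maps_to (t := Ioc 0 W) (g := (· / (d * Q))) fun l hl ↦ by
    rw [mem_Ioc] at hl ⊢
    exact ⟨Nat.div_pos (by lia) hdQ₀, (Nat.div_le_self l _).trans hl.2⟩]
  calc _ ≤ ∑ k ∈ Ioc 0 W, 3 * X * Y * N ^ (1 - σ) / d * (1 / k) := by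
        refine (norm_sum_le _ _).trans (sum_le_sum fun k hk ↦ ?_)
        refine hblock t h a d n₀ n₁ k Q _ x y X Y hadm hn₀ hn₁ (mem_Ioc.1 hk).1 hQ
          (fun l hl ↦ ?_) (fun l hl ↦ ?_) hx hy
        · obtain ⟨-, hlk⟩ := mem_filter.1 hl
          have hdiv := Nat.div_eq_iff hdQ₀ |>.1 hlk
          rw [mem_Ico]
          lia
        · have hlW : (l : ℝ) ≤ W := Nat.cast_le.2 (mem_Ioc.1 (mem_filter.1 hl).1).2
          exact (by gcongr : (l : ℝ) ^ 2 ≤ W ^ 2).trans hW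
    _ ≤ 3 * X * Y * N ^ (1 - σ) / d * (1 + Real.log N) := by
        rw [← mul_sum]
        gcongr
        exact sum_Ioc_one_div_le (by linarith) hWN

end TypeII

section DivisorBound

variable {ε : ℝ}

theorem one_add_mul_log_two_le_rpow (hε : 0 ≤ ε) {x : ℝ} (hx : 2 ≤ x) :
    1 + ε * Real.log 2 ≤ x ^ ε := by
  calc 1 + ε * Real.log 2 ≤ Real.exp (Real.log 2 * ε) := by
        linarith [Real.add_one_le_exp (Real.log 2 * ε)]
    _ = 2 ^ ε := (Real.rpow_def_of_pos two_pos ε).symm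
    _ ≤ x ^ ε := Real.rpow_le_rpow zero_le_two hx hε

theorem natCast_add_one_le_mul_rpow_pow (hε : 0 < ε) {x : ℝ} (hx : 2 ≤ x) (k : ℕ) :
    (k : ℝ) + 1 ≤ (1 + 1 / (ε * Real.log 2)) * (x ^ ε) ^ k := by
  have hs : 0 < ε * Real.log 2 := mul_pos hε (Real.log_pos one_lt_two)
  have hpow : 1 + (k : ℝ) * (ε * Real.log 2) ≤ (x ^ ε) ^ k :=
    (one_add_mul_le_pow (by linarith) k).trans
      (pow_le_pow_left₀ (by positivity) (one_add_mul_log_two_le_rpow hε.le hx) k)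
  calc (k : ℝ) + 1
      ≤ 1 + k + (k * (ε * Real.log 2) + 1 / (ε * Real.log 2)) := by
        linarith [show 0 ≤ k * (ε * Real.log 2) + 1 / (ε * Real.log 2) by positivity]
    _ = (1 + 1 / (ε * Real.log 2)) * (1 + k * (ε * Real.log 2)) := by field_simp; ring
    _ ≤ (1 + 1 / (ε * Real.log 2)) * (x ^ ε) ^ k := by gcongr

theorem natCast_add_one_le_rpow_pow (hε : 0 < ε) {x : ℝ} (hx : 2 ^ (1 / ε) ≤ x) (k : ℕ) :
    (k : ℝ) + 1 ≤ (x ^ ε) ^ k := by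
  have htwo : (2 : ℝ) ≤ x ^ ε := by
    calc (2 : ℝ) = (2 ^ (1 / ε)) ^ ε := by
          rw [← Real.rpow_mul zero_le_two, one_div_mul_cancel hε.ne', Real.rpow_one]
      _ ≤ x ^ ε := Real.rpow_le_rpow (by positivity) hx hε.le
  calc (k : ℝ) + 1 ≤ 2 ^ k := mod_cast Nat.lt_two_pow_self
    _ ≤ (x ^ ε) ^ k := pow_le_pow_left₀ zero_le_two htwo k

theorem prod_primeFactors_rpow_pow_factorization (ε : ℝ) {n : ℕ} (hn : n ≠ 0) :
    ∏ p ∈ n.primeFactors, ((p : ℝ) ^ ε) ^ n.factorization p = (n : ℝ) ^ ε := by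
  calc ∏ p ∈ n.primeFactors, ((p : ℝ) ^ ε) ^ n.factorization p
      = ∏ p ∈ n.primeFactors, ((p : ℝ) ^ n.factorization p) ^ ε :=
        prod_congr rfl fun p _ ↦ (Real.rpow_pow_comm p.cast_nonneg _ _)
    _ = (∏ p ∈ n.primeFactors, (p : ℝ) ^ n.factorization p) ^ ε :=
        Real.finsetProd_rpow _ _ (fun p _ ↦ by positivity) _
    _ = (n : ℝ) ^ ε := by
        conv_rhs => rw [← Nat.prod_factorization_pow_eq_self hn]
        simp [Finsupp.prod]

-- Only the boundedly many primes `p < 2 ^ (1 / ε)` contribute a factor exceeding `1`.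
theorem exists_card_divisors_le_mul_rpow (hε : 0 < ε) :
    ∃ C : ℝ, 1 ≤ C ∧ ∀ n : ℕ, n ≠ 0 → (#n.divisors : ℝ) ≤ C * (n : ℝ) ^ ε := by
  set T := ⌈(2 : ℝ) ^ (1 / ε)⌉₊
  set K := 1 + 1 / (ε * Real.log 2)
  have hK : 1 ≤ K := le_add_of_nonneg_right (by positivity)
  refine ⟨K ^ T, one_le_pow₀ hK, fun n hn ↦ ?_⟩
  have hfactor : ∀ p ∈ n.primeFactors, (n.factorization p : ℝ) + 1 ≤
      (if p < T then K else 1) * ((p : ℝ) ^ ε) ^ n.factorization p := by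
    intro p hp
    split_ifs with hpT
    · exact natCast_add_one_le_mul_rpow_pow hε
        (mod_cast (Nat.prime_of_mem_primeFactors hp).two_le) _
    · rw [one_mul]
      exact natCast_add_one_le_rpow_pow hε
        ((Nat.le_ceil _).trans (Nat.cast_le.2 (not_lt.1 hpT))) _
  have hsmall : #{p ∈ n.primeFactors | p < T} ≤ T := by
    simpa using card_le_card (show {p ∈ n.primeFactors | p < T} ⊆ range T from
      fun p hp ↦ mem_range.2 (mem_filter.1 hp).2)
  calc (#n.divisors : ℝ)
      = ∏ p ∈ n.primeFactors, ((n.factorization p : ℝ) + 1) := by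
        rw [Nat.card_divisors hn]; push_cast; rfl
    _ ≤ ∏ p ∈ n.primeFactors,
          (if p < T then K else 1) * ((p : ℝ) ^ ε) ^ n.factorization p :=
        prod_le_prod (fun p _ ↦ by positivity) hfactor
    _ = K ^ #{p ∈ n.primeFactors | p < T} * (n : ℝ) ^ ε := by
        rw [prod_mul_distrib, prod_primeFactors_rpow_pow_factorization ε hn, ← prod_filter,
          prod_const]
    _ ≤ K ^ T * (n : ℝ) ^ ε := by gcongr

end DivisorBound

section Vaughan

open scoped ArithmeticFunction.vonMangoldt ArithmeticFunction.Moebius ArithmeticFunction.zeta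

theorem norm_sum_Ioc_mul_le_of_monotone {f : ℕ → ℝ} (hf : Monotone f) (g : ℕ → ℂ) {A B : ℕ}
    {E : ℝ} (hAB : A ≤ B) (hfA : 0 ≤ f A)
    (hE : ∀ B' ≤ B, ‖∑ k ∈ Ioc A B', g k‖ ≤ E) :
    ‖∑ k ∈ Ioc A B, (f k : ℂ) * g k‖ ≤ 2 * f B * E := by
  have hpartial : ∀ B', A ≤ B' → B' ≤ B →
      ‖(∑ k ∈ Ioc A B', (f k : ℂ) * g k) - f B' * ∑ k ∈ Ioc A B', g k‖ ≤
        E * (f B' - f A) := by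
    intro B' hAB'
    induction B', hAB' using Nat.le_induction with
    | base => simp
    | succ n hn ih =>
      intro hnB
      have hstep : 0 ≤ f (n + 1) - f n := sub_nonneg.2 (hf n.le_succ)
      have hsplit : (∑ k ∈ Ioc A (n + 1), (f k : ℂ) * g k) -
            f (n + 1) * ∑ k ∈ Ioc A (n + 1), g k =
          ((∑ k ∈ Ioc A n, (f k : ℂ) * g k) - f n * ∑ k ∈ Ioc A n, g k) -
            (f (n + 1) - f n : ℝ) * ∑ k ∈ Ioc A n, g k := by
        rw [sum_Ioc_succ_top hn, sum_Ioc_succ_top hn]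
        push_cast
        ring
      calc _ ≤ E * (f n - f A) + (f (n + 1) - f n) * E := by
            rw [hsplit]
            refine (norm_sub_le _ _).trans (add_le_add (ih (by lia)) ?_)
            rw [norm_mul, Complex.norm_real, Real.norm_of_nonneg hstep]
            exact mul_le_mul_of_nonneg_left (hE n (by lia)) hstep
        _ = E * (f (n + 1) - f A) := by ring
  have hE₀ : 0 ≤ E := (norm_nonneg _).trans (hE B le_rfl)
  have hfB : 0 ≤ f B := hfA.trans (hf hAB)
  calc ‖∑ k ∈ Ioc A B, (f k : ℂ) * g k‖
      ≤ ‖(∑ k ∈ Ioc A B, (f k : ℂ) * g k) - f B * ∑ k ∈ Ioc A B, g k‖ +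
          ‖f B * ∑ k ∈ Ioc A B, g k‖ := norm_le_norm_sub_add _ _
    _ ≤ E * (f B - f A) + f B * E := by
        refine add_le_add (hpartial B hAB le_rfl) ?_
        rw [norm_mul, Complex.norm_real, Real.norm_of_nonneg hfB]
        exact mul_le_mul_of_nonneg_left (hE B le_rfl) hfB
    _ ≤ 2 * f B * E := by linarith [mul_nonneg hE₀ hfA]

theorem monotone_log_natCast : Monotone fun n : ℕ ↦ Real.log n := by
  refine monotone_nat_of_le_succ fun n ↦ ?_
  rcases n.eq_zero_or_pos with rfl | hn
  · simp
  · exact Real.log_le_log (Nat.cast_pos.2 hn) (Nat.cast_le.2 n.le_succ)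

theorem sum_Ioc_arithmeticFunction_mul (f g : ArithmeticFunction ℝ) (w : ℕ → ℂ) (n₀ n₁ : ℕ) :
    ∑ n ∈ Ioc n₀ n₁, ((f * g) n : ℂ) * w n =
      ∑ l ∈ Ioc 0 n₁, ∑ m ∈ Ioc (n₀ / l) (n₁ / l), (f l : ℂ) * g m * w (l * m) := by
  calc ∑ n ∈ Ioc n₀ n₁, ((f * g) n : ℂ) * w n
      = ∑ n ∈ Ioc n₀ n₁, ∑ l ∈ Ioc 0 n₁, ∑ m ∈ Ioc 0 n₁,
          if l * m = n then (f l : ℂ) * g m * w (l * m) else 0 := by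
        refine sum_congr rfl fun n hn ↦ ?_
        obtain ⟨hn₀, hn₁⟩ := mem_Ioc.1 hn
        rw [ArithmeticFunction.mul_apply,
          Nat.divisorsAntidiagonal_eq_prod_filter_of_le (by lia) hn₁, sum_filter, sum_product]
        push_cast
        simp_rw [sum_mul]
        refine sum_congr rfl fun l _ ↦ sum_congr rfl fun m _ ↦ ?_
        split_ifs with hlm <;> simp [hlm]
    _ = ∑ l ∈ Ioc 0 n₁, ∑ m ∈ Ioc 0 n₁, ∑ n ∈ Ioc n₀ n₁,
          if l * m = n then (f l : ℂ) * g m * w (l * m) else 0 := by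
        rw [sum_comm]
        exact sum_congr rfl fun l _ ↦ sum_comm
    _ = ∑ l ∈ Ioc 0 n₁, ∑ m ∈ Ioc (n₀ / l) (n₁ / l), (f l : ℂ) * g m * w (l * m) := by
        refine sum_congr rfl fun l hl ↦ ?_
        have hl₀ : 0 < l := (mem_Ioc.1 hl).1
        have hmem : ∀ m, l * m ∈ Ioc n₀ n₁ ↔ m ∈ Ioc (n₀ / l) (n₁ / l) := fun m ↦ by
          rw [mem_Ioc, mem_Ioc, Nat.div_lt_iff_lt_mul hl₀, Nat.le_div_iff_mul_le hl₀, mul_comm l]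
        simp_rw [sum_ite_eq, hmem]
        rw [sum_ite_mem, inter_eq_right.2
          (Ioc_subset_Ioc (Nat.zero_le _) (Nat.div_le_self _ _))]

/-- The arithmetic function `f · 1_p`, which agrees with `f` on the integers satisfying `p` and
vanishes elsewhere. -/
noncomputable def restrictTo (f : ArithmeticFunction ℝ) (p : ℕ → Prop) [DecidablePred p] :
    ArithmeticFunction ℝ :=
  ⟨fun n ↦ if p n then f n else 0, by simp⟩

theorem restrictTo_apply (f : ArithmeticFunction ℝ) (p : ℕ → Prop) [DecidablePred p] (n : ℕ) :
    restrictTo f p n = if p n then f n else 0 := rfl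

theorem abs_restrictTo_apply_le (f : ArithmeticFunction ℝ) (p : ℕ → Prop) [DecidablePred p]
    (n : ℕ) : |restrictTo f p n| ≤ |f n| := by
  rw [restrictTo_apply]
  split_ifs <;> simp

theorem restrictTo_add_restrictTo (f : ArithmeticFunction ℝ) {p q r : ℕ → Prop}
    [DecidablePred p] [DecidablePred q] [DecidablePred r]
    (hor : ∀ n, r n ↔ p n ∨ q n) (hand : ∀ n, ¬(p n ∧ q n)) :
    restrictTo f p + restrictTo f q = restrictTo f r := by
  ext n
  have := hor n
  have := hand n
  simp only [ArithmeticFunction.add_apply, restrictTo_apply]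
  split_ifs <;> first | tauto | simp

theorem restrictTo_le_add_restrictTo_lt (f : ArithmeticFunction ℝ) (V : ℕ) :
    restrictTo f (· ≤ V) + restrictTo f (V < ·) = f := by
  rw [restrictTo_add_restrictTo f (r := fun _ ↦ True) (by lia) (by lia)]
  ext n
  simp [restrictTo_apply]

theorem vonMangoldt_vaughan_identity (U V W : ℕ) :
    restrictTo Λ (V < ·) =
      restrictTo μ (· ≤ U) * ArithmeticFunction.log
        - restrictTo Λ (· ≤ V) * restrictTo μ (· ≤ U) * ζ
        + restrictTo Λ (fun n ↦ V < n ∧ n ≤ W) * (ζ * restrictTo μ (U < ·))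
        + ζ * restrictTo μ (U < ·) * restrictTo Λ (fun n ↦ V < n ∧ W < n) := by
  have hΛ := restrictTo_le_add_restrictTo_lt Λ V
  have hμ := restrictTo_le_add_restrictTo_lt μ U
  have hW : restrictTo Λ (fun n ↦ V < n ∧ n ≤ W) + restrictTo Λ (fun n ↦ V < n ∧ W < n) =
      restrictTo Λ (V < ·) := restrictTo_add_restrictTo Λ (by lia) (by lia)
  have hμζ : (μ * ζ : ArithmeticFunction ℝ) = 1 := ArithmeticFunction.coe_moebius_mul_coe_zeta
  rw [← ArithmeticFunction.vonMangoldt_mul_zeta]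
  linear_combination ζ * restrictTo μ (· ≤ U) * hΛ - restrictTo Λ (V < ·) * ζ * hμ
    - ζ * restrictTo μ (U < ·) * hW - restrictTo Λ (V < ·) * hμζ

theorem abs_moebius_apply_le_one (n : ℕ) : |(μ : ArithmeticFunction ℝ) n| ≤ 1 := by
  rw [ArithmeticFunction.intCoe_apply]
  exact_mod_cast ArithmeticFunction.abs_moebius_le_one

theorem abs_restrictTo_vonMangoldt_mul_restrictTo_moebius_le (p q : ℕ → Prop) [DecidablePred p]
    [DecidablePred q] (n : ℕ) :
    |(restrictTo Λ p * restrictTo μ q) n| ≤ Real.log n := by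
  rw [ArithmeticFunction.mul_apply, ← ArithmeticFunction.vonMangoldt_sum,
    ← Nat.map_div_right_divisors, sum_map]
  refine (abs_sum_le_sum_abs _ _).trans (sum_le_sum fun i _ ↦ ?_)
  calc |restrictTo Λ p i * restrictTo μ q (n / i)| ≤ |Λ i| * 1 := by
        rw [abs_mul]
        exact mul_le_mul (abs_restrictTo_apply_le _ _ _)
          ((abs_restrictTo_apply_le _ _ _).trans (abs_moebius_apply_le_one _))
          (abs_nonneg _) (abs_nonneg _)
    _ = Λ i := by rw [mul_one, abs_of_nonneg ArithmeticFunction.vonMangoldt_nonneg]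

theorem restrictTo_le_mul_restrictTo_le_apply_eq_zero (f g : ArithmeticFunction ℝ) {U V n : ℕ}
    (hn : V * U < n) : (restrictTo f (· ≤ V) * restrictTo g (· ≤ U)) n = 0 := by
  rw [ArithmeticFunction.mul_apply]
  refine sum_eq_zero fun x hx ↦ ?_
  rw [← (Nat.mem_divisorsAntidiagonal.1 hx).1] at hn
  by_cases hV : x.1 ≤ V
  · have hU : ¬x.2 ≤ U := fun hU ↦ (Nat.mul_le_mul hV hU).not_gt hn
    simp [restrictTo_apply, hU]
  · simp [restrictTo_apply, hV]

theorem abs_zeta_mul_restrictTo_moebius_le (p : ℕ → Prop) [DecidablePred p] (n : ℕ) :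
    |(ζ * restrictTo μ p) n| ≤ #n.divisors := by
  rw [mul_comm, ArithmeticFunction.coe_mul_zeta_apply]
  refine (abs_sum_le_sum_abs _ _).trans ?_
  simpa using sum_le_card_nsmul n.divisors _ 1 fun i _ ↦
    (abs_restrictTo_apply_le μ p i).trans (abs_moebius_apply_le_one i)

theorem mul_restrictTo_lt_apply_eq_zero (f g : ArithmeticFunction ℝ) {U n : ℕ} (hn : n ≤ U) :
    (f * restrictTo g (U < ·)) n = 0 := by
  rw [ArithmeticFunction.mul_apply]
  refine sum_eq_zero fun x hx ↦ ?_
  obtain ⟨hx, hn₀⟩ := Nat.mem_divisorsAntidiagonal.1 hx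
  have : x.2 ≤ n := Nat.le_of_dvd (Nat.pos_of_ne_zero hn₀) (Dvd.intro_left _ hx)
  simp [restrictTo_apply, this.trans hn]

end Vaughan

section VaughanEstimate

open scoped ArithmeticFunction.vonMangoldt ArithmeticFunction.Moebius ArithmeticFunction.zeta

variable {w : ℕ → ℂ} {n₀ n₁ V W : ℕ} {R S Y : ℝ}

theorem norm_sum_Ioc_mul_arithmeticFunction_le {M : ℕ} {G K : ℝ} (f g : ArithmeticFunction ℝ)
    (hf : ∀ l ≤ n₁, |f l| ≤ K) (hf₀ : ∀ l, M < l → f l = 0) (hG : 0 ≤ G)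
    (hg : ∀ l, 0 < l → l ≤ M → ‖∑ m ∈ Ioc (n₀ / l) (n₁ / l), (g m : ℂ) * w (l * m)‖ ≤ G / l) :
    ‖∑ n ∈ Ioc n₀ n₁, ((f * g) n : ℂ) * w n‖ ≤ K * G * (1 + Real.log n₁) := by
  have hK : 0 ≤ K := (abs_nonneg _).trans (hf 0 n₁.zero_le)
  have hterm : ∀ l ∈ Ioc 0 n₁,
      ‖∑ m ∈ Ioc (n₀ / l) (n₁ / l), (f l : ℂ) * g m * w (l * m)‖ ≤ K * G * (1 / l) := by
    intro l hl
    obtain ⟨hl₀, hl₁⟩ := mem_Ioc.1 hl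
    simp_rw [mul_assoc, ← mul_sum, norm_mul, Complex.norm_real, Real.norm_eq_abs]
    rcases le_or_gt l M with hlM | hlM
    · rw [mul_one_div]
      exact mul_le_mul (hf l hl₁) (hg l hl₀ hlM) (norm_nonneg _) hK
    · rw [hf₀ l hlM, abs_zero, zero_mul]
      positivity
  rw [sum_Ioc_arithmeticFunction_mul]
  refine (norm_sum_le_of_le _ hterm).trans ?_
  rw [← mul_sum]
  refine mul_le_mul_of_nonneg_left ?_ (mul_nonneg hK hG)
  rcases n₁.eq_zero_or_pos with rfl | hn₁
  · simp
  · exact sum_Ioc_one_div_le (Nat.one_le_cast.2 hn₁) le_rfl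

theorem norm_sum_Ioc_mul_arithmeticFunction_le_of_support (f g : ArithmeticFunction ℝ) {P Q : ℝ}
    (hf : ∀ l ≤ n₁, |f l| ≤ P) (hg : ∀ m ≤ n₁, |g m| ≤ Q) (hW : W ≤ n₁)
    (hfg : ∀ l m, l ∉ Ioc V W → l * m ≤ n₁ → f l * g m = 0)
    (hbilinear : ∀ (x y : ℕ → ℂ) (P Q : ℝ), (∀ l, ‖x l‖ ≤ P) → (∀ m, ‖y m‖ ≤ Q) →
      ‖∑ l ∈ Ioc V W, ∑ m ∈ Ioc (n₀ / l) (n₁ / l), x l * y m * w (l * m)‖ ≤ P * Q * S) :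
    ‖∑ n ∈ Ioc n₀ n₁, ((f * g) n : ℂ) * w n‖ ≤ P * Q * S := by
  have htruncate : ∀ (u : ArithmeticFunction ℝ) (B : ℝ), (∀ l ≤ n₁, |u l| ≤ B) →
      ∀ l, ‖if l ≤ n₁ then (u l : ℂ) else 0‖ ≤ B := by
    intro u B hu l
    split_ifs with hl
    · simpa using hu l hl
    · simpa using (abs_nonneg _).trans (hu 0 n₁.zero_le)
  have hsubset : Ioc V W ⊆ Ioc 0 n₁ := Ioc_subset_Ioc V.zero_le hW
  rw [sum_Ioc_arithmeticFunction_mul, ← sum_subset hsubset]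
  · convert hbilinear _ _ P Q (htruncate f P hf) (htruncate g Q hg) using 4 with l hl m hm
    rw [if_pos (mem_Ioc.1 (hsubset hl)).2,
      if_pos ((mem_Ioc.1 hm).2.trans (Nat.div_le_self _ _))]
  · intro l hl hlVW
    refine sum_eq_zero fun m hm ↦ ?_
    have hlm : l * m ≤ n₁ := by
      rw [mul_comm]
      exact (Nat.le_div_iff_mul_le (mem_Ioc.1 hl).1).1 (mem_Ioc.1 hm).2
    rw [← Complex.ofReal_mul, hfg l m hlVW hlm, Complex.ofReal_zero, zero_mul]

theorem abs_restrictTo_vonMangoldt_le_log {n : ℕ} (p : ℕ → Prop) [DecidablePred p]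
    (hn : n ≤ n₁) : |restrictTo Λ p n| ≤ Real.log n₁ := by
  refine (abs_restrictTo_apply_le _ _ _).trans ?_
  rw [abs_of_nonneg ArithmeticFunction.vonMangoldt_nonneg]
  exact ArithmeticFunction.vonMangoldt_le_log.trans (monotone_log_natCast hn)

theorem norm_sum_Ioc_restrictTo_moebius_mul_log_le (hn : n₀ ≤ n₁) (hR : 0 ≤ R)
    (htypeI : ∀ l, 0 < l → l ≤ V → ∀ B ≤ n₁ / l, ‖∑ m ∈ Ioc (n₀ / l) B, w (l * m)‖ ≤ R / l) :
    ‖∑ n ∈ Ioc n₀ n₁, ((restrictTo μ (· ≤ V) * ArithmeticFunction.log) n : ℂ) * w n‖ ≤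
      1 * (2 * Real.log n₁ * R) * (1 + Real.log n₁) := by
  refine norm_sum_Ioc_mul_arithmeticFunction_le (M := V) _ _
    (fun l _ ↦ (abs_restrictTo_apply_le _ _ _).trans (abs_moebius_apply_le_one l))
    (fun l hl ↦ by simp [restrictTo_apply, hl]) (by positivity) fun l hl hlV ↦ ?_
  have : 0 ≤ R / l := by positivity
  simp only [ArithmeticFunction.log_apply]
  calc _ ≤ 2 * Real.log (n₁ / l : ℕ) * (R / l) :=
        norm_sum_Ioc_mul_le_of_monotone monotone_log_natCast _ (Nat.div_le_div_right hn)
          (Real.log_natCast_nonneg _) (htypeI l hl hlV)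
    _ ≤ 2 * Real.log n₁ * (R / l) := by
        have := monotone_log_natCast (Nat.div_le_self n₁ l)
        gcongr
    _ = 2 * Real.log n₁ * R / l := (mul_div_assoc _ _ _).symm

theorem norm_sum_Ioc_vonMangoldt_mul_moebius_mul_zeta_le (hR : 0 ≤ R)
    (htypeI : ∀ l, 0 < l → l ≤ V * V → ‖∑ m ∈ Ioc (n₀ / l) (n₁ / l), w (l * m)‖ ≤ R / l) :
    ‖∑ n ∈ Ioc n₀ n₁,
        ((restrictTo Λ (· ≤ V) * restrictTo μ (· ≤ V) * ζ : ArithmeticFunction ℝ) n : ℂ) * w n‖ ≤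
      Real.log n₁ * R * (1 + Real.log n₁) := by
  refine norm_sum_Ioc_mul_arithmeticFunction_le (M := V * V) _ _
    (fun l hl ↦ (abs_restrictTo_vonMangoldt_mul_restrictTo_moebius_le _ _ _).trans
      (monotone_log_natCast hl))
    (fun l hl ↦ restrictTo_le_mul_restrictTo_le_apply_eq_zero _ _ hl) hR fun l hl hlV ↦ ?_
  convert htypeI l hl hlV using 3 with m hm
  have hm₀ : m ≠ 0 := ((Nat.zero_le _).trans_lt (mem_Ioc.1 hm).1).ne'
  simp [ArithmeticFunction.zeta_apply_ne hm₀]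

theorem vonMangoldt_mul_eq_of_lt (w : ℕ → ℂ) {n : ℕ} (hn : V < n) (W : ℕ) :
    (Λ n : ℂ) * w n =
      ((restrictTo μ (· ≤ V) * ArithmeticFunction.log) n : ℂ) * w n
        - ((restrictTo Λ (· ≤ V) * restrictTo μ (· ≤ V) * ζ : ArithmeticFunction ℝ) n : ℂ) * w n
        + ((restrictTo Λ (fun n ↦ V < n ∧ n ≤ W) * (ζ * restrictTo μ (V < ·))) n : ℂ) * w n
        + ((ζ * restrictTo μ (V < ·) * restrictTo Λ (fun n ↦ V < n ∧ W < n)) n : ℂ) * w n := by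
  have hvaughan := DFunLike.congr_fun (vonMangoldt_vaughan_identity V V W) n
  rw [restrictTo_apply, if_pos hn] at hvaughan
  rw [hvaughan, sub_eq_add_neg]
  simp only [ArithmeticFunction.add_apply, ArithmeticFunction.neg_apply]
  push_cast
  ring

theorem norm_sum_Ioc_vonMangoldt_mul_le (hn : n₀ ≤ n₁) (hV : V ≤ n₀) (hR : 0 ≤ R)
    (hY : ∀ n ≤ n₁, (#n.divisors : ℝ) ≤ Y)
    (htypeI : ∀ l, 0 < l → l ≤ V * V → ∀ B ≤ n₁ / l,
      ‖∑ m ∈ Ioc (n₀ / l) B, w (l * m)‖ ≤ R / l)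
    (htypeII : ∀ (x y : ℕ → ℂ) (P Q : ℝ), (∀ l, ‖x l‖ ≤ P) → (∀ m, ‖y m‖ ≤ Q) →
      ‖∑ l ∈ Ioc V n₁.sqrt, ∑ m ∈ Ioc (n₀ / l) (n₁ / l), x l * y m * w (l * m)‖ ≤ P * Q * S) :
    ‖∑ n ∈ Ioc n₀ n₁, (Λ n : ℂ) * w n‖ ≤
      Real.log n₁ * (3 * (R * (1 + Real.log n₁)) + 2 * (Y * S)) := by
  set W := n₁.sqrt
  set ν : ArithmeticFunction ℝ := ζ * restrictTo μ (V < ·)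
  have hν : ∀ n ≤ n₁, |ν n| ≤ Y := fun n hn ↦
    (abs_zeta_mul_restrictTo_moebius_le _ n).trans (hY n hn)
  have hI := norm_sum_Ioc_restrictTo_moebius_mul_log_le hn hR fun l hl hlV ↦
    htypeI l hl (hlV.trans V.le_mul_self)
  have hII := norm_sum_Ioc_vonMangoldt_mul_moebius_mul_zeta_le hR fun l hl hlV ↦
    htypeI l hl hlV _ le_rfl
  have hIII := norm_sum_Ioc_mul_arithmeticFunction_le_of_support
    (restrictTo Λ fun n ↦ V < n ∧ n ≤ W) ν
    (fun _ hl ↦ abs_restrictTo_vonMangoldt_le_log _ hl) hν n₁.sqrt_le_self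
    (fun l m hl _ ↦ by rw [restrictTo_apply, if_neg (mt mem_Ioc.2 hl), zero_mul]) htypeII
  have hIV := norm_sum_Ioc_mul_arithmeticFunction_le_of_support
    ν (restrictTo Λ fun n ↦ V < n ∧ W < n) hν
    (fun _ hl ↦ abs_restrictTo_vonMangoldt_le_log _ hl) n₁.sqrt_le_self
    (fun l m hl hlm ↦ by
      rcases le_or_gt l V with hlV | hlV
      · rw [mul_restrictTo_lt_apply_eq_zero ζ μ hlV, zero_mul]
      · have hm : m ≤ W := by
          by_contra! hm
          have hlW : W < l := by simpa [hlV] using hl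
          exact (Nat.lt_succ_sqrt n₁).not_ge ((Nat.mul_le_mul hlW hm).trans hlm)
        rw [restrictTo_apply, if_neg (by lia), mul_zero]) htypeII
  rw [sum_congr rfl fun n hn ↦ vonMangoldt_mul_eq_of_lt w (hV.trans_lt (mem_Ioc.1 hn).1) W,
    sum_add_distrib, sum_add_distrib, sum_sub_distrib]
  refine ((norm_add₃_le ..).trans (add_le_add_left (add_le_add_left (norm_sub_le _ _) _) _)).trans
    ?_
  linarith

end VaughanEstimate

section PrimeSum

open scoped ArithmeticFunction.vonMangoldt

variable {γ c σ θ δ : ℝ}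

theorem eventually_card_divisors_le_rpow (hδ : 0 < δ) :
    ∀ᶠ N : ℝ in atTop, ∀ n : ℕ, (n : ℝ) ≤ 2 * N → (#n.divisors : ℝ) ≤ N ^ δ := by
  obtain ⟨C, hC, hdivisors⟩ := exists_card_divisors_le_mul_rpow (half_pos hδ)
  filter_upwards [(tendsto_rpow_atTop (half_pos hδ)).eventually_ge_atTop (C * 2 ^ (δ / 2)),
    eventually_gt_atTop 0] with N hN hN₀ n hn
  rcases eq_or_ne n 0 with rfl | hn₀
  · simp only [Nat.divisors_zero, card_empty, Nat.cast_zero]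
    positivity
  calc (#n.divisors : ℝ) ≤ C * (n : ℝ) ^ (δ / 2) := hdivisors n hn₀
    _ ≤ C * (2 * N) ^ (δ / 2) := by gcongr
    _ = C * 2 ^ (δ / 2) * N ^ (δ / 2) := by rw [Real.mul_rpow zero_le_two hN₀.le, mul_assoc]
    _ ≤ N ^ (δ / 2) * N ^ (δ / 2) := by gcongr
    _ = N ^ δ := by rw [← Real.rpow_add hN₀, add_halves]

theorem log_natCast_le_one_add_log {n : ℕ} {N : ℝ} (hN : 1 ≤ N) (hn : n ≤ 2 * N) :
    Real.log n ≤ 1 + Real.log N := by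
  rcases n.eq_zero_or_pos with rfl | hn₀
  · simpa using by linarith [Real.log_nonneg hN]
  calc Real.log n ≤ Real.log (2 * N) := Real.log_le_log (Nat.cast_pos.2 hn₀) hn
    _ = Real.log 2 + Real.log N := Real.log_mul two_ne_zero (by linarith)
    _ ≤ 1 + Real.log N := by linarith [Real.log_two_lt_d9]

theorem eventually_log_mul_le_rpow (hδ : 0 < δ) :
    ∀ᶠ N : ℝ in atTop, ∀ (n : ℕ) (R : ℝ), (n : ℝ) ≤ 2 * N → 0 ≤ R →
      Real.log n * (3 * (R * (1 + Real.log n)) + 2 * (N ^ (δ / 3) * (3 * R * (1 + Real.log N)))) ≤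
        R * N ^ δ := by
  have hδ₃ : 0 < δ / 3 := by positivity
  filter_upwards [eventually_const_mul_one_add_log_le_rpow 12 hδ₃, eventually_ge_atTop 1]
    with N hlogN hN₁ n R hn hR
  have hlog := log_natCast_le_one_add_log hN₁ hn
  have := Real.log_natCast_nonneg n
  have hlogN₀ := Real.log_nonneg hN₁
  set L := 1 + Real.log N
  set P := N ^ (δ / 3) with hP
  have hP₁ : 1 ≤ P := Real.one_le_rpow hN₁ hδ₃.le
  calc Real.log n * (3 * (R * (1 + Real.log n)) + 2 * (P * (3 * R * L)))
      ≤ L * (3 * (R * (2 * L)) + 2 * (P * (3 * R * L))) := by gcongr; linarith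
    _ = 6 * (R * L ^ 2) + 6 * (R * L ^ 2) * P := by ring
    _ ≤ 6 * (R * L ^ 2) * P + 6 * (R * L ^ 2) * P := by
        linarith [le_mul_of_one_le_right (by positivity : 0 ≤ 6 * (R * L ^ 2)) hP₁]
    _ = R * (12 * L * L * P) := by ring
    _ ≤ R * (P * P * P) := by gcongr; linarith
    _ = R * N ^ δ := by
        rw [hP, ← Real.rpow_add (by linarith), ← Real.rpow_add (by linarith)]
        ring_nf

theorem two_mul_rpow_le_natFloor_rpow_add_one {N : ℝ} (hN : 0 < N) (hσ : 2 ≤ N ^ σ) (s : ℝ) :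
    2 * N ^ s ≤ ⌊N ^ (s + σ)⌋₊ + 1 :=
  calc 2 * N ^ s ≤ N ^ σ * N ^ s := by gcongr
    _ = N ^ (s + σ) := by rw [← Real.rpow_add hN, add_comm]
    _ ≤ ⌊N ^ (s + σ)⌋₊ + 1 := (Nat.lt_floor_add_one _).le

theorem natCast_floor_rpow_mul_self_le {N : ℝ} (hN : 0 < N) (s : ℝ) :
    ((⌊N ^ s⌋₊ * ⌊N ^ s⌋₊ : ℕ) : ℝ) ≤ N ^ (2 * s) := by
  have hfloor : (⌊N ^ s⌋₊ : ℝ) ≤ N ^ s := Nat.floor_le (by positivity)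
  calc ((⌊N ^ s⌋₊ * ⌊N ^ s⌋₊ : ℕ) : ℝ) ≤ N ^ s * N ^ s := by push_cast; gcongr
    _ = N ^ (2 * s) := by rw [← Real.rpow_add hN, two_mul]

theorem eventually_norm_sum_vonMangoldt_mul_weight_le (hγ₀ : 97 / 100 < γ) (hγ₁ : γ < 1)
    (hc : 1 ≤ c) (hσ : 0 < σ) (hθσ : θ + 8 * σ ≤ 1 / 5) (hθ : 0 ≤ θ) (hδ : 0 < δ) :
    ∀ᶠ N : ℝ in atTop, ∀ (t h : ℝ) (a : ℤ) (d : ℕ), IsAdmissible c σ θ N t h a d →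
      ‖∑ n ∈ Ioc ⌊N⌋₊ ⌊2 * N⌋₊, (Λ n : ℂ) * weight γ c t h a d n‖ ≤ N ^ (1 - σ) / d * N ^ δ := by
  filter_upwards [eventually_norm_sum_weight_mul_le hγ₀ hγ₁ (hγ₁.le.trans hc) hσ hθσ hθ,
    eventually_norm_sum_sum_mul_weight_le hγ₀ hγ₁ hc hσ hθσ hθ,
    eventually_card_divisors_le_rpow (δ := δ / 3) (by positivity), eventually_log_mul_le_rpow hδ,
    (tendsto_rpow_atTop hσ).eventually_ge_atTop 2, eventually_ge_atTop 1]
    with N htypeI htypeII hdivisors hlog hσN hN₁ t h a d hadm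
  have hN₀ : 0 < N := by linarith
  have hn₀ : N ≤ ⌊N⌋₊ + 1 := (Nat.lt_floor_add_one N).le
  have hn₁ : (⌊2 * N⌋₊ : ℝ) ≤ 2 * N := Nat.floor_le (by linarith)
  have hn : ⌊N⌋₊ ≤ ⌊2 * N⌋₊ := Nat.floor_le_floor (by linarith)
  have hsqrt : (⌊2 * N⌋₊.sqrt : ℝ) ^ 2 ≤ 2 * N :=
    le_trans (mod_cast Nat.sqrt_le' ⌊2 * N⌋₊) hn₁
  have hV : ⌊N ^ (θ + 2 * σ + σ)⌋₊ ≤ ⌊N⌋₊ :=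
    Nat.floor_le_floor (Real.rpow_le_self_of_one_le hN₁ (by linarith))
  refine (norm_sum_Ioc_vonMangoldt_mul_le hn hV (R := N ^ (1 - σ) / d) (by positivity)
    (fun n hn ↦ hdivisors n ((Nat.cast_le.2 hn).trans hn₁)) ?_ ?_).trans
    (hlog _ _ hn₁ (by positivity))
  · intro l hl hlV B hB
    refine htypeI t h a d l _ B hadm hl ?_ fun k hk ↦ ?_
    · calc (l : ℝ) ≤ _ := Nat.cast_le.2 hlV
        _ ≤ N ^ (2 * (θ + 2 * σ + σ)) := natCast_floor_rpow_mul_self_le hN₀ _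
        _ = N ^ (2 * θ + 6 * σ) := by ring_nf
    · exact mul_mem_Icc_of_mem_Ioc_div hn₀ (by linarith) hl (Ioc_subset_Ioc_right hB hk)
  · intro x y P Q hx hy
    refine (htypeII t h a d _ _ _ _ x y P Q hadm hn₀ hn₁
      (two_mul_rpow_le_natFloor_rpow_add_one hN₀ hσN _) hsqrt hx hy).trans_eq ?_
    ring

end PrimeSum

section Assembly

open scoped ArithmeticFunction.vonMangoldt

variable {γ c θ : ℝ}

theorem sum_mul_sum_mul_e_eq_sum_sum_weight (γ c t : ℝ) (a : ℤ) (s : Finset ℕ) (H D : ℕ)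
    (u : ℕ → ℂ) (b : ℕ → ℕ → ℂ) :
    ∑ n ∈ s, u n * ∑ h ∈ Icc 1 H,
        (∑ d ∈ (Icc 1 D).filter fun d : ℕ ↦ Int.gcd d a = 1 ∧ (d : ℤ) ∣ n - a, b d h) *
          e (t * (n : ℝ) ^ c - (h : ℝ) * (n : ℝ) ^ γ) =
      ∑ h ∈ Icc 1 H, ∑ d ∈ (Icc 1 D).filter fun d : ℕ ↦ Int.gcd d a = 1,
        b d h * ∑ n ∈ s, u n * weight γ c t h a d n := by
  simp_rw [← filter_filter, sum_filter (fun d : ℕ ↦ (d : ℤ) ∣ _), sum_mul, mul_sum]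
  rw [sum_comm]
  refine sum_congr rfl fun h _ ↦ ?_
  rw [sum_comm]
  refine sum_congr rfl fun d _ ↦ sum_congr rfl fun n _ ↦ ?_
  rw [weight]
  split_ifs
  · ring
  · simp

theorem norm_sum_sum_mul_le {H D : ℕ} {N K : ℝ} {b F : ℕ → ℕ → ℂ} {p : ℕ → Prop}
    [DecidablePred p] (hN : 1 ≤ N) (hD : D ≤ N) (hK : 0 ≤ K) (hb : ∀ d h, ‖b d h‖ ≤ 1)
    (hF : ∀ h ∈ Icc 1 H, ∀ d ∈ Icc 1 D, p d → ‖F d h‖ ≤ K / d) :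
    ‖∑ h ∈ Icc 1 H, ∑ d ∈ Icc 1 D with p d, b d h * F d h‖ ≤ H * (K * (1 + Real.log N)) := by
  have hinner : ∀ h ∈ Icc 1 H,
      ‖∑ d ∈ Icc 1 D with p d, b d h * F d h‖ ≤ K * (1 + Real.log N) := by
    intro h hh
    calc ‖∑ d ∈ Icc 1 D with p d, b d h * F d h‖
        ≤ ∑ d ∈ Icc 1 D with p d, K * (1 / d) := by
          refine norm_sum_le_of_le _ fun d hd ↦ ?_
          obtain ⟨hdD, hpd⟩ := mem_filter.1 hd
          rw [norm_mul, mul_one_div]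
          exact (mul_le_of_le_one_left (norm_nonneg _) (hb d h)).trans (hF h hh d hdD hpd)
      _ ≤ ∑ d ∈ Icc 1 D, K * (1 / d) :=
          sum_le_sum_of_subset_of_nonneg (filter_subset _ _) fun _ _ _ ↦ by positivity
      _ ≤ K * (1 + Real.log N) := by
          rw [← mul_sum]
          exact mul_le_mul_of_nonneg_left (sum_Ioc_one_div_le hN hD) hK
  exact (norm_sum_le_of_le _ hinner).trans_eq (by simp)

theorem natCast_floor_le_of_le {x y : ℝ} (hy : 0 ≤ y) (hxy : x ≤ y) : (⌊x⌋₊ : ℝ) ≤ y :=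
  (Nat.cast_le.2 (Nat.floor_le_floor hxy)).trans (Nat.floor_le hy)

theorem vonMangoldt_G_estimate_general (hγ₀ : 97 / 100 < γ) (hγ₁ : γ < 1) (hc : 1 ≤ c)
    (hθ : 0 ≤ θ) (hθγ : θ + 8 * (1 - γ) < 1 / 5) :
    ∃ η > 0, ∀ᶠ N : ℝ in atTop, ∀ (a : ℤ) (H D t : ℝ) (b : ℕ → ℕ → ℂ),
      H ≤ N ^ (1 - γ + η) → D ≤ N ^ θ → |t| ≤ N ^ (1 / 3 - c) → (∀ d h, ‖b d h‖ ≤ 1) →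
      ‖∑ n ∈ Ioc ⌊N⌋₊ ⌊2 * N⌋₊, (Λ n : ℂ) * ∑ h ∈ Icc 1 ⌊H⌋₊,
          (∑ d ∈ (Icc 1 ⌊D⌋₊).filter fun d : ℕ ↦ Int.gcd d a = 1 ∧ (d : ℤ) ∣ n - a, b d h) *
            e (t * (n : ℝ) ^ c - (h : ℝ) * (n : ℝ) ^ γ)‖ ≤ N ^ (1 - η) := by
  obtain ⟨η, hη, hθη⟩ : ∃ η > 0, θ + 8 * (1 - γ + 3 * η) ≤ 1 / 5 :=
    ⟨(1 / 5 - θ - 8 * (1 - γ)) / 24, by linarith, by linarith⟩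
  have hη₂ : 0 < η / 2 := by positivity
  refine ⟨η, hη, ?_⟩
  filter_upwards [eventually_norm_sum_vonMangoldt_mul_weight_le hγ₀ hγ₁ hc
      (by linarith : 0 < 1 - γ + 3 * η) hθη hθ hη₂,
    eventually_const_mul_one_add_log_le_rpow 1 hη₂, eventually_ge_atTop 1]
    with N hprime hlog hN₁ a H D t b hH hD ht hb
  have hN₀ : 0 < N := by linarith
  have hH' : (⌊H⌋₊ : ℝ) ≤ N ^ (1 - γ + η) := natCast_floor_le_of_le (by positivity) hH
  have hD' : (⌊D⌋₊ : ℝ) ≤ N ^ θ := natCast_floor_le_of_le (by positivity) hD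
  have htc : |t| * N ^ c ≤ N ^ (1 / 3 : ℝ) := by
    calc |t| * N ^ c ≤ N ^ (1 / 3 - c) * N ^ c := by gcongr
      _ = N ^ (1 / 3 : ℝ) := by rw [← Real.rpow_add hN₀, sub_add_cancel]
  have hlog₀ : 0 ≤ 1 + Real.log N := by linarith [Real.log_nonneg hN₁]
  set σ := 1 - γ + 3 * η with hσ
  rw [one_mul] at hlog
  rw [sum_mul_sum_mul_e_eq_sum_sum_weight]
  refine (norm_sum_sum_mul_le (K := N ^ (1 - σ) * N ^ (η / 2)) hN₁
    (hD'.trans (Real.rpow_le_self_of_one_le hN₁ (by linarith))) (by positivity) hb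
    fun h hh d hd hda ↦ ?_).trans ?_
  · obtain ⟨hh₁, hhH⟩ := mem_Icc.1 hh
    obtain ⟨hd₁, hdD⟩ := mem_Icc.1 hd
    rw [← div_mul_eq_mul_div]
    refine hprime t h a d ⟨htc, Nat.one_le_cast.2 hh₁, ?_, hd₁, ?_, hda⟩
    · calc (h : ℝ) ≤ N ^ (1 - γ + η) := (Nat.cast_le.2 hhH).trans hH'
        _ ≤ N ^ σ := Real.rpow_le_rpow_of_exponent_le hN₁ (by linarith)
    · exact (Nat.cast_le.2 hdD).trans hD'
  · calc ⌊H⌋₊ * (N ^ (1 - σ) * N ^ (η / 2) * (1 + Real.log N))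
        ≤ N ^ (1 - γ + η) * (N ^ (1 - σ) * N ^ (η / 2) * N ^ (η / 2)) := by gcongr
      _ = N ^ (1 - η) := by
        simp only [← Real.rpow_add hN₀]
        rw [hσ]
        ring_nf

theorem eventually_rpow_one_sub_le_div_log_rpow (A : ℝ) {η : ℝ} (hη : 0 < η) :
    ∀ᶠ N : ℝ in atTop, N ^ (1 - η) ≤ N / Real.log N ^ A := by
  filter_upwards [(isLittleO_log_rpow_rpow_atTop A hη).bound one_pos, eventually_gt_atTop 1]
    with N hlog hN₁
  have hN₀ : 0 < N := by linarith
  have hlog₀ : 0 < Real.log N ^ A := Real.rpow_pos_of_pos (Real.log_pos hN₁) A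
  rw [one_mul, Real.norm_of_nonneg hlog₀.le, Real.norm_of_nonneg (by positivity)] at hlog
  rw [Real.rpow_sub hN₀, Real.rpow_one]
  gcongr

theorem exists_forall_rpow_le_of_eventually {P : ℝ → Prop} (hP : ∀ᶠ N in atTop, P N) {s : ℝ}
    (hs : 0 < s) : ∃ X₀, ∀ X ≥ X₀, ∀ N, X ^ s ≤ N → P N :=
  eventually_atTop.1 ((tendsto_rpow_atTop hs).eventually (eventually_forall_ge_atTop.2 hP))

end Assembly

open scoped Classical in
/-- The estimate `(31)`: with `θ = (443/55)γ - 173/22 - ε`, `X^{1-ε} ≤ N ≤ X`,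
`H = N^{1-γ+ε}`, `N^θ ≤ D ≤ N^{θ+ε/2}`, `|t| ≤ X^{1/4-c}`, and `|c(d,h)| = 1`,
`|∑_{n ∼ N} Λ(n) G(n)| ≪ N/(log N)^A`, where
`G(n) = ∑_{1 ≤ h ≤ H} F_h(n) e(tn^c - hn^γ)` and
`F_h(n) = ∑_{d ≤ D, (d,a)=1, d ∣ n-a} c(d,h)`. -/
theorem vonMangoldt_G_estimate (γ : ℝ) (hγ₁ : 865 / 886 < γ) (hγ₂ : γ < 1)
    (a : ℤ) (ha : a ≠ 0) (c : ℝ) (hc₁ : 1 < c) (hc₂ : c < 3) (hc₃ : c ≠ 2)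
    (A : ℝ) (hA : 0 < A) :
    ∃ ε₀ : ℝ, 0 < ε₀ ∧ ∀ ε : ℝ, 0 < ε → ε < ε₀ →
      ∃ C : ℝ, 0 < C ∧ ∃ X₀ : ℝ, ∀ X : ℝ, X₀ ≤ X →
      ∀ N H D t : ℝ, ∀ cdh : ℕ → ℕ → ℂ,
        X ^ (1 - ε) ≤ N → N ≤ X →
        H = N ^ (1 - γ + ε) →
        N ^ ((443 / 55) * γ - 173 / 22 - ε) ≤ D →
        D ≤ N ^ ((443 / 55) * γ - 173 / 22 - ε + ε / 2) →
        |t| ≤ X ^ ((1 : ℝ) / 4 - c) →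
        (∀ d h : ℕ, ‖cdh d h‖ = 1) →
        ‖∑ n ∈ Finset.Ioc ⌊N⌋₊ ⌊2 * N⌋₊,
            ((ArithmeticFunction.vonMangoldt n : ℝ) : ℂ) *
              ∑ h ∈ Finset.Icc 1 ⌊H⌋₊,
                (∑ d ∈ (Finset.Icc 1 ⌊D⌋₊).filter
                    (fun d : ℕ => Int.gcd (d : ℤ) a = 1 ∧ (d : ℤ) ∣ ((n : ℤ) - a)),
                  cdh d h) *
                e (t * (n : ℝ) ^ c - (h : ℝ) * (n : ℝ) ^ γ)‖
        ≤ C * N / (Real.log N) ^ A := by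
  obtain ⟨η, hη, hpower⟩ := vonMangoldt_G_estimate_general (γ := γ) (c := c)
    (θ := 443 / 55 * γ - 173 / 22) (by linarith) hγ₂ hc₁.le (by linarith) (by linarith)
  refine ⟨min η 1, lt_min hη one_pos, fun ε hε hεη ↦ ⟨1, one_pos, ?_⟩⟩
  obtain ⟨hεη, hε₁⟩ := lt_min_iff.1 hεη
  obtain ⟨X₀, hX₀⟩ := exists_forall_rpow_le_of_eventually
    ((hpower.and (eventually_rpow_one_sub_le_div_log_rpow A hη)).and (eventually_ge_atTop 1))
    (sub_pos.2 hε₁)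
  refine ⟨X₀, fun X hX N H D t cdh hXN hNX hH _ hD ht hcdh ↦ ?_⟩
  obtain ⟨⟨hpower, hlog⟩, hN⟩ := hX₀ X hX N hXN
  have hpow {r s : ℝ} (hrs : r ≤ s) : N ^ r ≤ N ^ s := Real.rpow_le_rpow_of_exponent_le hN hrs
  have htN : |t| ≤ N ^ (1 / 4 - c) :=
    ht.trans (Real.rpow_le_rpow_of_nonpos (by linarith) hNX (by linarith))
  rw [one_mul]
  exact (hpower a H D t cdh (hH.trans_le (hpow (by linarith))) (hD.trans (hpow (by linarith)))
    (htN.trans (hpow (by linarith))) fun d h ↦ (hcdh d h).le).trans hlog
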